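/- arXiv:1506.04406 — 2 statements merged into one kernel-verified Lean document; each statement's English description precedes it below -/
import Mathlib

section
/- For permutations σ < π, the Möbius function of the finite poset A^{σ,π} satisfies μ(A^{σ,π}) = (−1)^{|π|−|σ|}·NE(σ,π) + Σ_{S ∈ EZ^{σ,π}} (−1)^{|S|}. -/
/-!
A rightmost set of positions meets each adjacency of `π` in a final segment, so the rightmost sets,
ordered by inclusion, form a product of chains. Via `etaHat` this product is identified with
`[∅, π̂₁] × ⋯ × [∅, π̂ₜ]` (`etaHat_le_iff`, `exists_etaHat_eq`), and `A^{σ,π}` with the rightmost sets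
lying strictly between some rightmost embedding and the full set (`midSetsIso`). Surjectivity, and the
existence of a rightmost embedding, rest on the fact that moving a letter one step to the right inside
an adjacency preserves the pattern (`patternOf_shift`).

With a top adjoined, `A^{σ,π}` is an up-set of this product of chains, so the Möbius function from the
top is that of the product: `weight π F = (-1) ^ |Fᶜ|` if `F` is normal and `0` otherwise
(`sum_weight`). Hence `μ(A^{σ,π})` is minus the total weight of that up-set (`muHat_eq_of`,
`muHat_Aspace_eq_of`). The embeddings all have `|σ|` letters, so they form an antichain, and adding
them to the up-set yields all rightmost sets containing some embedding (`upSets`). Therefore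
`μ(A^{σ,π})` is the weight of the embeddings, which is `(-1) ^ (|π| - |σ|) NE(σ,π)`
(`sum_Ehat_weight`), minus the weight of `upSets`. By inclusion–exclusion, the latter equals
`-∑ (-1) ^ |S|` over the nonempty sets `S` of rightmost embeddings whose union is everything, that is,
whose zero sets have empty intersection (`sum_upSets_weight`).
-/

open scoped Classical

set_option maxHeartbeats 1000000

/-! ## The permutation pattern poset -/

/-- The type of all (finite) permutations: a permutation of length `n` is an element of
`Equiv.Perm (Fin n)`; the letter in position `i` is `p.2 i` (letters compared via the
order on `Fin n`). -/
abbrev PermPat : Type := Σ n : ℕ, Equiv.Perm (Fin n)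

/-- Pattern containment: `PatLe σ π` iff `π` has a subsequence in the same relative order
as `σ`, i.e. there is an occurrence of `σ` in `π`. -/
def PatLe (p q : PermPat) : Prop :=
  ∃ f : Fin p.1 ↪o Fin q.1, ∀ i j : Fin p.1, p.2 i < p.2 j ↔ q.2 (f i) < q.2 (f j)

lemma patLe_refl (p : PermPat) : PatLe p p := by
  refine ⟨(OrderIso.refl (Fin p.1)).toOrderEmbedding, fun i j => ?_⟩
  simp

lemma patLe_trans {p q r : PermPat} (h1 : PatLe p q) (h2 : PatLe q r) : PatLe p r := by
  obtain ⟨f, hf⟩ := h1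
  obtain ⟨g, hg⟩ := h2
  exact ⟨f.trans g, fun i j => (hf i j).trans (hg (f i) (f j))⟩

lemma PatLe.len_le {p q : PermPat} (h : PatLe p q) : p.1 ≤ q.1 := by
  obtain ⟨f, -⟩ := h
  simpa using Fintype.card_le_of_embedding f.toEmbedding

lemma StrictMono.fin_apply_eq {n : ℕ} {f : Fin n → Fin n} (hf : StrictMono f) (i : Fin n) :
    f i = i := by
  have hle : ∀ m : ℕ, ∀ j : Fin n, j.val = m → j.val ≤ (f j).val := by
    intro m
    induction m with
    | zero => intro j hj; omega
    | succ m ih =>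
      intro j hj
      have hm : m < n := by omega
      have h1 : f ⟨m, hm⟩ < f j := hf (by simp [Fin.lt_def]; omega)
      have h2 := ih ⟨m, hm⟩ rfl
      simp only [Fin.lt_def] at h1
      simp only [Fin.val_mk] at h1 h2
      omega
  have hge : ∀ m : ℕ, ∀ j : Fin n, j.val + m + 1 = n → (f j).val ≤ j.val := by
    intro m
    induction m with
    | zero => intro j hj; have := (f j).isLt; omega
    | succ m ih =>
      intro j hj
      have hs : j.val + 1 < n := by omega
      have h1 : f j < f ⟨j.val + 1, hs⟩ := hf (by simp [Fin.lt_def])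
      have h2 := ih ⟨j.val + 1, hs⟩ (by simp only [Fin.val_mk]; omega)
      simp only [Fin.lt_def] at h1
      simp only [Fin.val_mk] at h1 h2
      omega
  exact Fin.ext (le_antisymm (hge (n - 1 - i.val) i (by have := i.isLt; omega)) (hle i.val i rfl))

lemma patLe_antisymm {p q : PermPat} (hpq : PatLe p q) (hqp : PatLe q p) : p = q := by
  obtain ⟨k, σ⟩ := p
  obtain ⟨n, π⟩ := q
  have hkn : k = n := le_antisymm hpq.len_le hqp.len_le
  subst hkn
  obtain ⟨f, hf⟩ := hpq
  have hfid : ∀ i, f i = i := fun i => f.strictMono.fin_apply_eq i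
  have key : ∀ i j : Fin k, σ i < σ j ↔ π i < π j := by
    intro i j
    simpa [hfid] using hf i j
  have hmono : StrictMono (fun a => π (σ.symm a)) := by
    intro a b hab
    have : σ (σ.symm a) < σ (σ.symm b) := by simpa using hab
    exact (key _ _).mp this
  have hid : ∀ a, π (σ.symm a) = a := fun a => hmono.fin_apply_eq a
  have hσπ : σ = π := by
    apply Equiv.ext
    intro x
    have := hid (σ x)
    simpa using this.symm
  rw [hσπ]

/-- The permutation pattern poset `𝒫`. -/
instance : PartialOrder PermPat where
  le := PatLe
  le_refl := patLe_refl
  le_trans _ _ _ := patLe_trans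
  le_antisymm _ _ := patLe_antisymm

lemma PermPat.le_def {p q : PermPat} : p ≤ q ↔ PatLe p q := Iff.rfl

/-! ## The Möbius function of the pattern poset

`permMu` is the Möbius function of the pattern poset: `μ(σ,σ) = 1`,
`μ(σ,π) = -∑_{σ ≤ z < π} μ(σ,z)` for `σ < π`, and `μ(σ,π) = 0` if `σ ≰ π`.
(Every `z < π` is of length strictly smaller than `π`, so the inner sum ranges over
the permutations of each length `m < |π|`.) -/
noncomputable def permMu (p q : PermPat) : ℤ :=
  if p = q then 1
  else if PatLe p q then
    - ∑ m : Fin q.1, ∑ z : Equiv.Perm (Fin m.1),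
        if PatLe p ⟨m.1, z⟩ ∧ PatLe ⟨m.1, z⟩ q then permMu p ⟨m.1, z⟩ else 0
  else 0
termination_by q.1
decreasing_by exact m.isLt

/-! ## The Möbius function of a finite poset -/

/-- The Möbius function `μ(a,b)` of a finite poset. -/
noncomputable def muPair {X : Type*} [PartialOrder X] [Fintype X] (a b : X) : ℤ :=
  if a = b then 1
  else if a ≤ b then
    - ∑ z ∈ (Finset.univ.filter fun z : X => a ≤ z ∧ z < b).attach, muPair a z.1
  else 0
termination_by Set.ncard {z : X | z < b}
decreasing_by
  rename_i z
  have hz : z.1 < b := ((Finset.mem_filter.mp z.2).2).2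
  exact Set.ncard_lt_ncard
    ((Set.ssubset_iff_of_subset (fun w hw => lt_trans hw hz)).mpr ⟨z.1, hz, fun hmem => absurd hmem (by exact lt_irrefl _)⟩)
    (Set.toFinite _)

instance instFiniteOption' {α : Type*} [Finite α] : Finite (Option α) :=
  Finite.of_equiv (α ⊕ PUnit.{1}) (Equiv.optionEquivSumPUnit.{0} α).symm
instance {α : Type*} [Finite α] : Finite (WithTop α) := inferInstanceAs (Finite (Option α))
instance {α : Type*} [Finite α] : Finite (WithBot α) := inferInstanceAs (Finite (Option α))
instance {α : Type*} [Fintype α] : Fintype (WithTop α) := inferInstanceAs (Fintype (Option α))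
instance {α : Type*} [Fintype α] : Fintype (WithBot α) := inferInstanceAs (Fintype (Option α))

/-- For a finite poset `X`, `muHat X` is `μ(0̂,1̂)` computed in the poset obtained from `X`
by adjoining a new bottom element `0̂` and a new top element `1̂`.  (For infinite `X` the
junk value `0` is returned.) -/
noncomputable def muHat (X : Type*) [PartialOrder X] : ℤ :=
  if h : Finite X then
    letI := h
    letI : Fintype (WithBot (WithTop X)) := Fintype.ofFinite _
    muPair (⊥ : WithBot (WithTop X)) ⊤
  else 0

/-! ## Adjacencies, embeddings, normality -/

/-- The position one step before `j` (or `j` itself when `j = 0`). -/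
def prevPos {n : ℕ} (j : Fin n) : Fin n := ⟨j.val - 1, lt_of_le_of_lt (Nat.sub_le _ _) j.isLt⟩

/-- `Linked π j` says position `j` is linked to the preceding position, i.e. the letters in
positions `j-1, j` have consecutive values.  These are exactly the positions lying in the
tail of some adjacency of `π` (an adjacency is a maximal factor of consecutively valued
increasing or decreasing letters; its tail is all but its first letter). -/
def Linked {n : ℕ} (π : Equiv.Perm (Fin n)) (j : Fin n) : Prop :=
  0 < j.val ∧ ((π j).val + 1 = (π (prevPos j)).val ∨ (π (prevPos j)).val + 1 = (π j).val)

/-- The number of adjacencies (maximal linked runs) of `π`. -/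
noncomputable def numBlocks {n : ℕ} (π : Equiv.Perm (Fin n)) : ℕ :=
  (Finset.univ.filter fun j : Fin n => ¬ Linked π j).card

/-- The index (starting from 0) of the adjacency of `π` containing position `j`. -/
noncomputable def blockIdx {n : ℕ} (π : Equiv.Perm (Fin n)) (j : Fin n) : ℕ :=
  (Finset.univ.filter fun m : Fin n => ¬ Linked π m ∧ m ≤ j).card - 1

/-- The set of positions in the `i`-th adjacency of `π`. -/
noncomputable def blockF {n : ℕ} (π : Equiv.Perm (Fin n)) (i : ℕ) : Finset (Fin n) :=
  Finset.univ.filter fun j => blockIdx π j = i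

/-- The standardization of an injective tuple `v` of values in `Fin n`: the permutation of
`Fin m` whose letters are in the same relative order as `v`. -/
noncomputable def stdize {m n : ℕ} (v : Fin m → Fin n) (hv : Function.Injective v) :
    Equiv.Perm (Fin m) :=
  (Equiv.ofInjective v hv).trans
    (monoEquivOfFin (Set.range v)
      (by rw [Set.card_range_of_injective hv, Fintype.card_fin])).symm.toEquiv

/-- The pattern (as an abstract permutation) formed by the letters of `π` in the set `E`
of positions. -/
noncomputable def patternOf {n : ℕ} (π : Equiv.Perm (Fin n)) (E : Finset (Fin n)) : PermPat :=
  ⟨E.card, stdize (fun i => π ((E.orderIsoOfFin rfl) i))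
    (by
      intro i j hij
      exact (E.orderIsoOfFin rfl).injective (Subtype.coe_injective (π.injective hij)))⟩

/-- `E` is (the set of positions of the nonzero entries of) an embedding of `p` in `π`:
the letters of `π` in positions `E` form an occurrence of `p`. -/
def IsEmb (p : PermPat) {n : ℕ} (π : Equiv.Perm (Fin n)) (E : Finset (Fin n)) : Prop :=
  patternOf π E = p

/-- An embedding (given by its set `E` of nonzero positions) is normal if every position in
the tail of an adjacency of `π` is nonzero. -/
def IsNormal {n : ℕ} (π : Equiv.Perm (Fin n)) (E : Finset (Fin n)) : Prop :=
  ∀ j, Linked π j → j ∈ E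

/-- `NE p π`: the number of normal embeddings of `p` in `π`. -/
noncomputable def NE (p : PermPat) {n : ℕ} (π : Equiv.Perm (Fin n)) : ℕ :=
  Set.ncard {E : Finset (Fin n) | IsEmb p π E ∧ IsNormal π E}

/-- An embedding is rightmost if, within each adjacency of `π`, all of its zero entries
precede all of its nonzero entries. -/
def IsRightmost {n : ℕ} (π : Equiv.Perm (Fin n)) (E : Finset (Fin n)) : Prop :=
  ∀ i j : Fin n, blockIdx π i = blockIdx π j → i ≤ j → i ∈ E → j ∈ E

/-- Membership in `Ê^{p,π}`, the set of rightmost embeddings of `p` in `π`. -/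
def EhatMem (p : PermPat) {n : ℕ} (π : Equiv.Perm (Fin n)) (E : Finset (Fin n)) : Prop :=
  IsEmb p π E ∧ IsRightmost π E

/-- Membership in `EZ^{p,π}`: `S` is a nonempty set of rightmost embeddings of `p` in `π`
whose zero sets have empty intersection (every position is nonzero in some member). -/
def EZmem (p : PermPat) {n : ℕ} (π : Equiv.Perm (Fin n)) (S : Finset (Finset (Fin n))) : Prop :=
  S.Nonempty ∧ (∀ E ∈ S, EhatMem p π E) ∧ ∀ j : Fin n, ∃ E ∈ S, j ∈ E

/-- The sum `∑_{S ∈ EZ^{p,π}} (-1)^{|S|}`. -/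
noncomputable def EZsum (p : PermPat) {n : ℕ} (π : Equiv.Perm (Fin n)) : ℤ :=
  ∑ S ∈ Finset.univ.filter (fun S : Finset (Finset (Fin n)) => EZmem p π S), (-1 : ℤ) ^ S.card

/-! ## The adjacency decomposition and the posets `P(η)`, `A^{σ,π}` -/

/-- `π̂`, the adjacency decomposition of `π`, as a tuple of permutations. -/
noncomputable def Phat {n : ℕ} (π : Equiv.Perm (Fin n)) : Fin (numBlocks π) → PermPat :=
  fun i => patternOf π (blockF π i.val)

/-- `η̂`, the decomposition of an embedding (with nonzero positions `E`) along the
adjacencies of `π`. -/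
noncomputable def etaHat {n : ℕ} (π : Equiv.Perm (Fin n)) (E : Finset (Fin n)) :
    Fin (numBlocks π) → PermPat :=
  fun i => patternOf π (E.filter fun j => blockIdx π j = i.val)

/-- The product poset `P(η) = [η̂_1,π̂_1] × ⋯ × [η̂_t,π̂_t]`, as a subset of the product of
copies of the pattern poset indexed by the adjacencies of `π`. -/
noncomputable def Pemb {n : ℕ} (π : Equiv.Perm (Fin n)) (E : Finset (Fin n)) :
    Set (Fin (numBlocks π) → PermPat) :=
  Set.Icc (etaHat π E) (Phat π)

/-- `P(η)°`: the product poset `P(η)` with its bottom element `η̂` and top element `π̂`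
removed. -/
noncomputable def PembO {n : ℕ} (π : Equiv.Perm (Fin n)) (E : Finset (Fin n)) :
    Set (Fin (numBlocks π) → PermPat) :=
  Pemb π E \ {etaHat π E, Phat π}

/-- `A^{p,π} = ⋃_{η ∈ Ê^{p,π}} P(η)°`. -/
noncomputable def Aspace (p : PermPat) {n : ℕ} (π : Equiv.Perm (Fin n)) :
    Set (Fin (numBlocks π) → PermPat) :=
  ⋃ E ∈ {E : Finset (Fin n) | EhatMem p π E}, PembO π E

/-! ## Sundry notions -/

/-- The number of descents of a permutation. -/
noncomputable def desNum {n : ℕ} (π : Equiv.Perm (Fin n)) : ℕ :=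
  (Finset.univ.filter fun j : Fin n => ∃ h : j.val + 1 < n, π ⟨j.val + 1, h⟩ < π j).card

/-- The direct sum of two permutations. -/
def dsum {a b : ℕ} (σ : Equiv.Perm (Fin a)) (τ : Equiv.Perm (Fin b)) :
    Equiv.Perm (Fin (a + b)) :=
  finSumFinEquiv.symm.trans ((Equiv.sumCongr σ τ).trans finSumFinEquiv)

/-- A permutation is indecomposable if it is nonempty and not the direct sum of two
nonempty permutations. -/
def Indecomp (p : PermPat) : Prop :=
  0 < p.1 ∧ ¬ ∃ (a b : ℕ) (σ : Equiv.Perm (Fin a)) (τ : Equiv.Perm (Fin b)),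
    0 < a ∧ 0 < b ∧ p = ⟨a + b, dsum σ τ⟩

/-- `dpow lam m = lam ⊕ ⋯ ⊕ lam` (`m` summands). -/
def dpow {l : ℕ} (lam : Equiv.Perm (Fin l)) : (m : ℕ) → Equiv.Perm (Fin (m * l))
  | 0 => (finCongr (Nat.zero_mul l).symm).permCongr 1
  | m + 1 => (finCongr (by ring : m * l + l = (m + 1) * l)).permCongr (dsum (dpow lam m) lam)

/-- Direct sum of permutations, on `PermPat`. -/
def dsumP (p q : PermPat) : PermPat := ⟨p.1 + q.1, dsum p.2 q.2⟩

/-- The direct sum of a list of permutations. -/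
def dsumList : List PermPat → PermPat
  | [] => ⟨0, 1⟩
  | p :: L => dsumP p (dsumList L)

/-- The increasing permutation `ι_n = 12⋯n`. -/
def iota (n : ℕ) : PermPat := ⟨n, 1⟩

/-! ### Möbius function of a finite poset from the top -/

lemma sum_muPair_le {P : Type*} [PartialOrder P] [Fintype P] [OrderBot P] (b : P) :
    ∑ a ∈ Finset.univ.filter (fun a : P => a ≤ b), muPair ⊥ a = if b = ⊥ then 1 else 0 := by
  have hs : Finset.univ.filter (fun a : P => a ≤ b)
      = insert b (Finset.univ.filter fun a : P => ⊥ ≤ a ∧ a < b) := by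
    ext a
    simp [le_iff_eq_or_lt (b := b)]
  rw [hs, Finset.sum_insert (by simp)]
  rw [muPair.eq_def ⊥ b]
  by_cases hb : b = ⊥
  · subst hb
    simp
  · rw [if_neg (Ne.symm hb), if_pos bot_le, if_neg hb,
      Finset.sum_attach _ (fun z => muPair ⊥ z)]
    ring

/-- The left recursion defining `muPair` and its right-hand counterpart agree: a function whose
sums over upper sets are the indicator of `⊤` computes `μ(·, ⊤)`; here this is only needed at
`⊥`. -/
lemma muPair_bot_top_eq {P : Type*} [PartialOrder P] [Fintype P] [BoundedOrder P] (f : P → ℤ)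
    (hf : ∀ a, ∑ b ∈ Finset.univ.filter (fun b : P => a ≤ b), f b = if a = ⊤ then 1 else 0) :
    muPair (⊥ : P) ⊤ = f ⊥ := by
  have h1 : ∑ a : P, ∑ b : P, (if a ≤ b then muPair ⊥ a * f b else 0) = muPair (⊥ : P) ⊤ := by
    have : ∀ a : P, ∑ b : P, (if a ≤ b then muPair ⊥ a * f b else 0)
        = if a = ⊤ then muPair ⊥ a else 0 := by
      intro a
      rw [← Finset.sum_filter, ← Finset.mul_sum, hf]
      simp
    simp [this]
  have h2 : ∑ b : P, ∑ a : P, (if a ≤ b then muPair ⊥ a * f b else 0) = f ⊥ := by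
    have : ∀ b : P, ∑ a : P, (if a ≤ b then muPair ⊥ a * f b else 0)
        = if b = ⊥ then f b else 0 := by
      intro b
      rw [← Finset.sum_filter, ← Finset.sum_mul, sum_muPair_le]
      simp
    simp [this]
  rw [← h1, Finset.sum_comm, h2]

lemma sum_withBot_withTop {X : Type*} [Fintype X] (i : Fintype (WithBot (WithTop X)))
    (F : WithBot (WithTop X) → ℤ) :
    ∑ y, F y = F ⊥ + (F ⊤ + ∑ x : X, F ((x : WithTop X) : WithBot (WithTop X))) := by
  have h : i = (inferInstanceAs (Fintype (Option (Option X)))) := Subsingleton.elim _ _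
  subst h
  refine (Fintype.sum_option (α := Option X) F).trans ?_
  congr 1
  exact Fintype.sum_option (α := X) (fun y => F (some y))

/-- If `g` behaves like `μ(·, 1̂)` on `X`, then `μ(0̂, 1̂)` is minus the total of `g` over
`X ∪ {1̂}`. -/
lemma muHat_eq_of {X : Type*} [PartialOrder X] [Fintype X] (g : X → ℤ)
    (hg : ∀ x, ∑ y ∈ Finset.univ.filter (fun y : X => x ≤ y), g y = -1) :
    muHat X = -1 - ∑ x, g x := by
  have hfin : Finite X := inferInstance
  unfold muHat
  rw [dif_pos hfin]
  let f : WithBot (WithTop X) → ℤ := fun y =>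
    WithBot.recBotCoe (-1 - ∑ x, g x) (fun y => WithTop.recTopCoe 1 g y) y
  have f1 : f ⊥ = -1 - ∑ x, g x := rfl
  have f2 : f ⊤ = 1 := rfl
  have f3 : ∀ x : X, f ((x : WithTop X) : WithBot (WithTop X)) = g x := fun x => rfl
  rw [← f1]
  refine @muPair_bot_top_eq _ _ (Fintype.ofFinite _) _ f ?_
  intro a
  rw [Finset.sum_filter, sum_withBot_withTop]
  induction a using WithBot.recBotCoe with
  | bot => simp [f1, f2, f3]
  | coe a =>
    induction a using WithTop.recTopCoe with
    | top =>
      have hT : ((⊤ : WithTop X) : WithBot (WithTop X)) = ⊤ := rfl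
      have : ∀ x : X, ¬ ((⊤ : WithBot (WithTop X)) ≤ ((x : WithTop X) : WithBot (WithTop X))) := by
        intro x
        rw [← hT, WithBot.coe_le_coe]
        simp
      simp [hT, f2, this]
    | coe x =>
      have h1 : ((x : WithTop X) : WithBot (WithTop X)) ≠ ⊤ := by
        change ((x : WithTop X) : WithBot (WithTop X)) ≠ ((⊤ : WithTop X) : WithBot (WithTop X))
        simp
      have := hg x
      rw [Finset.sum_filter] at this
      simp [h1, f2, f3, this]

/-! ### Patterns -/

lemma stdize_lt_iff {m n : ℕ} (v : Fin m → Fin n) (hv : Function.Injective v) (i j : Fin m) :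
    stdize v hv i < stdize v hv j ↔ v i < v j := by
  simp only [stdize, Equiv.trans_apply, RelIso.coe_fn_toEquiv, OrderIso.lt_iff_lt]
  exact Iff.rfl

/-- Containment in `patternOf π D` is witnessed by an occurrence in `π` itself with all positions
in `D`; this hides the standardization. -/
lemma le_patternOf_iff {n : ℕ} (π : Equiv.Perm (Fin n)) (D : Finset (Fin n)) (p : PermPat) :
    p ≤ patternOf π D ↔ ∃ g : Fin p.1 → Fin n, StrictMono g ∧ (∀ i, g i ∈ D) ∧
      ∀ i j, p.2 i < p.2 j ↔ π (g i) < π (g j) := by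
  constructor
  · rintro ⟨f, hf⟩
    refine ⟨fun i => D.orderIsoOfFin rfl (f i), fun i j h => ?_, fun i => Subtype.coe_prop _,
      fun i j => ?_⟩
    · exact (D.orderIsoOfFin rfl).strictMono (f.strictMono h)
    · rw [hf]
      exact stdize_lt_iff _ _ _ _
  · rintro ⟨g, hg, hD, hv⟩
    refine ⟨OrderEmbedding.ofStrictMono
      (fun i => (D.orderIsoOfFin rfl).symm ⟨g i, hD i⟩) fun i j h => ?_, fun i j => ?_⟩
    · exact (D.orderIsoOfFin rfl).symm.strictMono (hg h)
    · rw [hv]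
      refine Iff.symm ((stdize_lt_iff _ _ _ _).trans ?_)
      have h : ∀ i, ((D.orderIsoOfFin rfl ((D.orderIsoOfFin rfl).symm ⟨g i, hD i⟩) : D) : Fin n)
          = g i := fun i => by rw [OrderIso.apply_symm_apply]
      change π (D.orderIsoOfFin rfl ((D.orderIsoOfFin rfl).symm ⟨g i, hD i⟩)) <
        π (D.orderIsoOfFin rfl ((D.orderIsoOfFin rfl).symm ⟨g j, hD j⟩)) ↔ _
      rw [h, h]

lemma PermPat.eq_of_le_of_len {p q : PermPat} (h : p ≤ q) (hl : q.1 ≤ p.1) : p = q := by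
  obtain ⟨k, σ⟩ := p
  obtain ⟨n, π⟩ := q
  obtain rfl : k = n := le_antisymm (PatLe.len_le h) hl
  refine le_antisymm h ?_
  obtain ⟨f, hf⟩ := h
  have hfid : ∀ i, f i = i := fun i => f.strictMono.fin_apply_eq i
  exact ⟨f, fun i j => by have := hf i j; simp only [hfid] at this ⊢; exact this.symm⟩

lemma patternOf_le_of_map {n : ℕ} (π : Equiv.Perm (Fin n)) {D F : Finset (Fin n)}
    (g : Fin n → Fin n) (hg : ∀ x ∈ D, ∀ y ∈ D, x < y → g x < g y) (hF : ∀ x ∈ D, g x ∈ F)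
    (hv : ∀ x ∈ D, ∀ y ∈ D, (π x < π y ↔ π (g x) < π (g y))) :
    patternOf π D ≤ patternOf π F := by
  obtain ⟨u, hu, huD, huv⟩ := (le_patternOf_iff π D (patternOf π D)).1 le_rfl
  refine (le_patternOf_iff _ _ _).2 ⟨fun i => g (u i), fun i j h => hg _ (huD i) _ (huD j) (hu h),
    fun i => hF _ (huD i), fun i j => (huv i j).trans (hv _ (huD i) _ (huD j))⟩

lemma patternOf_mono {n : ℕ} (π : Equiv.Perm (Fin n)) {D F : Finset (Fin n)} (h : D ⊆ F) :
    patternOf π D ≤ patternOf π F :=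
  patternOf_le_of_map π id (fun _ _ _ _ h => h) (fun _ hx => h hx) (fun _ _ _ _ => Iff.rfl)

lemma exists_patternOf_eq {n : ℕ} (π : Equiv.Perm (Fin n)) {p : PermPat} {F : Finset (Fin n)}
    (g : Fin p.1 → Fin n) (hg : StrictMono g) (hF : ∀ i, g i ∈ F)
    (hv : ∀ i j, p.2 i < p.2 j ↔ π (g i) < π (g j)) : ∃ D ⊆ F, patternOf π D = p := by
  refine ⟨Finset.univ.image g, ?_, ?_⟩
  · intro x hx
    obtain ⟨i, -, rfl⟩ := Finset.mem_image.1 hx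
    exact hF i
  · refine (PermPat.eq_of_le_of_len ((le_patternOf_iff _ _ _).2 ⟨g, hg, by simp, hv⟩) ?_).symm
    change (Finset.univ.image g).card ≤ p.1
    exact Finset.card_image_le.trans (by simp)

/-! ### Adjacencies and rightmost sets -/

section Blocks

variable {n : ℕ} (π : Equiv.Perm (Fin n))

lemma not_linked_zero {j : Fin n} (h : j.val = 0) : ¬ Linked π j := fun hl => by
  have := hl.1
  omega

lemma blockCard_pos (j : Fin n) :
    0 < (Finset.univ.filter fun m : Fin n => ¬ Linked π m ∧ m ≤ j).card := by
  refine Finset.card_pos.2 ⟨⟨0, by have := j.isLt; omega⟩, ?_⟩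
  simp only [Finset.mem_filter, Finset.mem_univ, true_and]
  exact ⟨not_linked_zero π rfl, Fin.le_def.2 (Nat.zero_le _)⟩

lemma blockIdx_lt (j : Fin n) : blockIdx π j < numBlocks π := by
  have h1 := blockCard_pos π j
  have h2 : (Finset.univ.filter fun m : Fin n => ¬ Linked π m ∧ m ≤ j).card ≤ numBlocks π :=
    Finset.card_le_card (fun m hm => by
      simp only [Finset.mem_filter, Finset.mem_univ, true_and] at hm ⊢
      exact hm.1)
  unfold blockIdx
  omega

lemma blockIdx_mono {i j : Fin n} (h : i ≤ j) : blockIdx π i ≤ blockIdx π j := by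
  refine Nat.sub_le_sub_right (Finset.card_le_card fun m hm => ?_) 1
  simp only [Finset.mem_filter, Finset.mem_univ, true_and] at hm ⊢
  exact ⟨hm.1, hm.2.trans h⟩

lemma linked_of_blockIdx_eq {i j : Fin n} (h : i < j) (hb : blockIdx π i = blockIdx π j) :
    Linked π j := by
  by_contra hj
  have hlt : (Finset.univ.filter fun m : Fin n => ¬ Linked π m ∧ m ≤ i).card
      < (Finset.univ.filter fun m : Fin n => ¬ Linked π m ∧ m ≤ j).card := by
    refine Finset.card_lt_card ((Finset.ssubset_iff_of_subset fun m hm => ?_).2 ⟨j, ?_, ?_⟩)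
    · simp only [Finset.mem_filter, Finset.mem_univ, true_and] at hm ⊢
      exact ⟨hm.1, hm.2.trans h.le⟩
    · simp [hj]
    · simp [h]
  have := blockCard_pos π i
  unfold blockIdx at hb
  omega

lemma prevPos_lt {j : Fin n} (h : 0 < j.val) : prevPos j < j := by
  rw [Fin.lt_def]
  simp only [prevPos]
  omega

lemma le_prevPos {i j : Fin n} (h : i < j) : i ≤ prevPos j := by
  rw [Fin.lt_def] at h
  rw [Fin.le_def]
  simp only [prevPos]
  omega

lemma blockIdx_prevPos {j : Fin n} (h : Linked π j) : blockIdx π (prevPos j) = blockIdx π j := by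
  unfold blockIdx
  congr 2
  ext m
  simp only [Finset.mem_filter, Finset.mem_univ, true_and]
  refine and_congr_right fun hm => ⟨fun h' => h'.trans (prevPos_lt h.1).le, fun h' => ?_⟩
  exact le_prevPos (lt_of_le_of_ne h' (by rintro rfl; exact hm h))

/-- Every adjacency has a head: its first position, the only one that is not linked. -/
lemma exists_head (j : Fin n) : ∃ i ≤ j, ¬ Linked π i ∧ blockIdx π i = blockIdx π j := by
  induction j using WellFoundedLT.induction with
  | ind j ih =>
    by_cases h : Linked π j
    · obtain ⟨i, hi, hl, hb⟩ := ih _ (prevPos_lt h.1)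
      exact ⟨i, hi.trans (prevPos_lt h.1).le, hl, hb.trans (blockIdx_prevPos π h)⟩
    · exact ⟨j, le_rfl, h, rfl⟩

lemma IsNormal.isRightmost {E : Finset (Fin n)} (h : IsNormal π E) : IsRightmost π E := by
  intro i j hb hij hi
  rcases hij.eq_or_lt with rfl | hlt
  · exact hi
  · exact h j (linked_of_blockIdx_eq π hlt hb)

lemma isRightmost_univ : IsRightmost π Finset.univ := fun _ _ _ _ _ => Finset.mem_univ _

/-- A rightmost set is everything as soon as it contains the heads of all adjacencies. -/
lemma IsRightmost.eq_univ {E : Finset (Fin n)} (h : IsRightmost π E)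
    (hE : ∀ j, ¬ Linked π j → j ∈ E) : E = Finset.univ := by
  refine Finset.eq_univ_iff_forall.2 fun j => ?_
  obtain ⟨i, hi, hl, hb⟩ := exists_head π j
  exact h i j hb hi (hE i hl)

/-- A set that is not rightmost has a letter that can be moved one step to the right inside its
adjacency. -/
lemma exists_gap {E : Finset (Fin n)} (h : ¬ IsRightmost π E) :
    ∃ j, Linked π j ∧ prevPos j ∈ E ∧ j ∉ E := by
  unfold IsRightmost at h
  push Not at h
  obtain ⟨i, j, hb, hij, hi, hj⟩ := h
  induction j using WellFoundedLT.induction with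
  | ind j ih =>
    have hlt : i < j := lt_of_le_of_ne hij (by rintro rfl; exact hj hi)
    have hl := linked_of_blockIdx_eq π hlt hb
    by_cases hp : prevPos j ∈ E
    · exact ⟨j, hl, hp, hj⟩
    · exact ih _ (prevPos_lt hl.1) (hb.trans (blockIdx_prevPos π hl).symm) (le_prevPos hlt) hp

/-- Moving a letter one step to the right inside its adjacency does not change the pattern:
positions `j - 1`, `j` are neighbours and so are their values. -/
lemma patternOf_shift {E : Finset (Fin n)} {j : Fin n} (hl : Linked π j) (hp : prevPos j ∈ E)
    (hj : j ∉ E) : patternOf π (insert j (E.erase (prevPos j))) = patternOf π E := by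
  have hlt := prevPos_lt hl.1
  refine (PermPat.eq_of_le_of_len (patternOf_le_of_map π
    (fun x => if x = prevPos j then j else x) ?_ ?_ ?_) ?_).symm
  · intro x hx y hy hxy
    split_ifs with h1 h2 h2
    · subst h1; subst h2; exact absurd hxy (lt_irrefl _)
    · subst h1
      refine lt_of_le_of_ne ?_ (by rintro rfl; exact hj hy)
      rw [Fin.lt_def] at hxy
      rw [Fin.le_def]
      simp only [prevPos] at hxy
      omega
    · subst h2
      exact hxy.trans hlt
    · exact hxy
  · intro x hx
    split_ifs with h1
    · simp
    · simp [h1, hx]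
  · intro x hx y hy
    have key : ∀ z ∈ E, z ≠ prevPos j →
        (π z).val ≠ (π j).val ∧ (π z).val ≠ (π (prevPos j)).val := by
      intro z hz hz'
      refine ⟨fun h => ?_, fun h => ?_⟩
      · have := π.injective (Fin.ext h)
        exact hj (this ▸ hz)
      · exact hz' (π.injective (Fin.ext h))
    have hv := hl.2
    split_ifs with h1 h2 h2
    · subst h1; subst h2; simp
    · subst h1
      have := key y hy h2
      rw [Fin.lt_def, Fin.lt_def]
      omega
    · subst h2
      have := key x hx h1
      rw [Fin.lt_def, Fin.lt_def]
      omega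
    · exact Iff.rfl
  · change (insert j (E.erase (prevPos j))).card ≤ E.card
    rw [Finset.card_insert_of_notMem (by simp [hj]), Finset.card_erase_add_one hp]

/-- Every set of positions can be pushed to the right inside the adjacencies without changing its
pattern; the sum of the positions is the potential function. -/
lemma exists_rightmost (E : Finset (Fin n)) : ∃ D, IsRightmost π D ∧ patternOf π D = patternOf π E ∧
    ∀ x ∈ D, ∃ y ∈ E, blockIdx π x = blockIdx π y := by
  obtain ⟨D, hD, hmax⟩ := Finset.exists_max_image
    (Finset.univ.filter fun D : Finset (Fin n) => patternOf π D = patternOf π E ∧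
      ∀ x ∈ D, ∃ y ∈ E, blockIdx π x = blockIdx π y) (fun D => ∑ x ∈ D, x.val)
    ⟨E, by simpa using fun x hx => ⟨x, hx, rfl⟩⟩
  simp only [Finset.mem_filter, Finset.mem_univ, true_and] at hD hmax
  refine ⟨D, ?_, hD⟩
  by_contra hr
  obtain ⟨j, hl, hp, hj⟩ := exists_gap π hr
  have := hmax (insert j (D.erase (prevPos j)))
    ⟨(patternOf_shift π hl hp hj).trans hD.1, fun x hx => ?_⟩
  · rw [Finset.sum_insert (by simp [hj])] at this
    have h2 := Finset.sum_erase_add D (fun x : Fin n => x.val) hp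
    have h3 := prevPos_lt hl.1
    rw [Fin.lt_def] at h3
    omega
  · rcases Finset.mem_insert.1 hx with rfl | hx
    · rw [← blockIdx_prevPos π hl]
      exact hD.2 _ hp
    · exact hD.2 x (Finset.mem_of_mem_erase hx)

/-! ### The poset as a family of rightmost sets ordered by inclusion -/

/-- A rightmost set meets each adjacency in a final segment, so it is determined by the lengths of
these segments; comparing patterns blockwise amounts to comparing lengths. -/
lemma etaHat_le_iff {E F : Finset (Fin n)} (hE : IsRightmost π E) (hF : IsRightmost π F) :
    etaHat π E ≤ etaHat π F ↔ E ⊆ F := by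
  refine ⟨fun h => ?_, fun h i => patternOf_mono π (Finset.filter_subset_filter _ h)⟩
  intro x hx
  by_contra hxF
  have hc : (E.filter fun j => blockIdx π j = blockIdx π x).card
      ≤ (F.filter fun j => blockIdx π j = blockIdx π x).card :=
    PatLe.len_le (h ⟨blockIdx π x, blockIdx_lt π x⟩)
  -- two final segments of one adjacency are comparable, and `x` only lies in the first
  have hss : (F.filter fun j => blockIdx π j = blockIdx π x)
      ⊂ (E.filter fun j => blockIdx π j = blockIdx π x) := by
    refine (Finset.ssubset_iff_of_subset fun y hy => ?_).2 ⟨x, by simp [hx], by simp [hxF]⟩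
    simp only [Finset.mem_filter] at hy ⊢
    refine ⟨?_, hy.2⟩
    rcases le_total x y with hxy | hxy
    · exact hE x y hy.2.symm hxy hx
    · exact absurd (hF y x hy.2 hxy hy.1) hxF
  exact absurd (Finset.card_lt_card hss) (by omega)

lemma etaHat_inj {E F : Finset (Fin n)} (hE : IsRightmost π E) (hF : IsRightmost π F) :
    etaHat π E = etaHat π F ↔ E = F := by
  refine ⟨fun h => Finset.Subset.antisymm ?_ ?_, fun h => by rw [h]⟩
  · exact (etaHat_le_iff π hE hF).1 h.le
  · exact (etaHat_le_iff π hF hE).1 h.ge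

lemma etaHat_univ : etaHat π Finset.univ = Phat π := rfl

/-- Each component of `c` occurs in an adjacency of `π`; pushing the occurrences to the right gives
a rightmost set with blockwise patterns `c`. -/
lemma exists_etaHat_eq {c : Fin (numBlocks π) → PermPat} (hc : c ≤ Phat π) :
    ∃ F, IsRightmost π F ∧ etaHat π F = c := by
  have h1 : ∀ i, ∃ D, IsRightmost π D ∧ patternOf π D = c i ∧ ∀ x ∈ D, blockIdx π x = i.val := by
    intro i
    obtain ⟨g, hg, hF, hv⟩ := (le_patternOf_iff _ _ _).1 (hc i)
    obtain ⟨D, hD, hp⟩ := exists_patternOf_eq π g hg hF hv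
    obtain ⟨D', hr, hp', hb⟩ := exists_rightmost π D
    refine ⟨D', hr, hp'.trans hp, fun x hx => ?_⟩
    obtain ⟨y, hy, hxy⟩ := hb x hx
    have := hD hy
    simp only [blockF, Finset.mem_filter, Finset.mem_univ, true_and] at this
    rw [hxy, this]
  choose D hr hp hb using h1
  refine ⟨Finset.univ.biUnion D, ?_, ?_⟩
  · intro x y hxy hle hx
    simp only [Finset.mem_biUnion, Finset.mem_univ, true_and] at hx ⊢
    obtain ⟨i, hi⟩ := hx
    exact ⟨i, hr i x y hxy hle hi⟩
  · funext i
    rw [← hp i]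
    unfold etaHat
    congr 1
    ext x
    simp only [Finset.mem_filter, Finset.mem_biUnion, Finset.mem_univ, true_and]
    constructor
    · rintro ⟨⟨i', hi'⟩, hx⟩
      have : i' = i := Fin.ext ((hb i' x hi').symm.trans hx)
      exact this ▸ hi'
    · exact fun h => ⟨⟨i, h⟩, hb i x h⟩

/-- The rightmost sets strictly between a rightmost embedding of `p` and the full set; `etaHat`
identifies them, ordered by inclusion, with `Aspace p π`. -/
noncomputable def midSets (p : PermPat) : Finset (Finset (Fin n)) :=
  Finset.univ.filter fun F => IsRightmost π F ∧ F ≠ Finset.univ ∧ ∃ E, EhatMem p π E ∧ E ⊂ F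

lemma mem_midSets {p : PermPat} {F : Finset (Fin n)} : F ∈ midSets π p ↔
    IsRightmost π F ∧ F ≠ Finset.univ ∧ ∃ E, EhatMem p π E ∧ E ⊂ F := by
  simp [midSets]

lemma mem_Aspace_iff {p : PermPat} {c : Fin (numBlocks π) → PermPat} :
    c ∈ Aspace p π ↔ ∃ F ∈ midSets π p, etaHat π F = c := by
  simp only [Aspace, PembO, Pemb, Set.mem_iUnion, Set.mem_ofPred_eq, Set.mem_sdiff, Set.mem_Icc,
    Set.mem_insert_iff, Set.mem_singleton_iff, not_or, mem_midSets]
  constructor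
  · rintro ⟨E, hE, ⟨h1, h2⟩, h3, h4⟩
    obtain ⟨F, hF, rfl⟩ := exists_etaHat_eq π h2
    refine ⟨F, ⟨hF, ?_, E, hE, ?_⟩, rfl⟩
    · rintro rfl
      exact h4 rfl
    · refine Finset.ssubset_iff_subset_ne.2 ⟨(etaHat_le_iff π hE.2 hF).1 h1, ?_⟩
      rintro rfl
      exact h3 rfl
  · rintro ⟨F, ⟨hF, hu, E, hE, hEF⟩, rfl⟩
    refine ⟨E, hE, ⟨(etaHat_le_iff π hE.2 hF).2 hEF.1, ?_⟩, ?_, ?_⟩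
    · rw [← etaHat_univ]
      exact (etaHat_le_iff π hF (isRightmost_univ π)).2 (Finset.subset_univ _)
    · rw [etaHat_inj π hF hE.2]
      exact hEF.ne'
    · rw [← etaHat_univ, etaHat_inj π hF (isRightmost_univ π)]
      exact hu

/-- The order isomorphism between the rightmost sets strictly above some rightmost embedding and
`Aspace p π`. -/
noncomputable def midSetsIso (p : PermPat) : {F // F ∈ midSets π p} ≃o Aspace p π :=
  RelIso.ofSurjective
    (OrderEmbedding.ofMapLEIff
      (fun F => (⟨etaHat π F.1, (mem_Aspace_iff π).2 ⟨F.1, F.2, rfl⟩⟩ : Aspace p π))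
      fun F G => etaHat_le_iff π ((mem_midSets π).1 F.2).1 ((mem_midSets π).1 G.2).1)
    fun c => by
      obtain ⟨F, hF, h⟩ := (mem_Aspace_iff π).1 c.2
      exact ⟨⟨F, hF⟩, Subtype.ext h⟩

lemma muHat_Aspace_eq_of (p : PermPat) (g : Finset (Fin n) → ℤ)
    (hg : ∀ F ∈ midSets π p, ∑ G ∈ (midSets π p).filter (fun G => F ⊆ G), g G = -1) :
    muHat (Aspace p π) = -1 - ∑ F ∈ midSets π p, g F := by
  let e := midSetsIso π p
  let _ : Fintype (Aspace p π) := Fintype.ofEquiv _ e.toEquiv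
  rw [muHat_eq_of (fun c => g (e.symm c).1), ← Finset.sum_coe_sort (midSets π p) g]
  · congr 1
    exact Equiv.sum_comp e.symm.toEquiv (fun F : {F // F ∈ midSets π p} => g F.1)
  · intro c
    rw [← hg (e.symm c).1 (e.symm c).2, Finset.sum_filter, Finset.sum_filter,
      ← Finset.sum_coe_sort (midSets π p)]
    rw [← Equiv.sum_comp e.symm.toEquiv]
    refine Finset.sum_congr rfl fun d _ => ?_
    have : c ≤ d ↔ (e.symm c).1 ⊆ (e.symm d).1 := by
      rw [← e.symm.le_iff_le]
      exact Iff.rfl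
    simp only [this]
    rfl

/-! ### The Möbius weight and inclusion–exclusion -/

/-- The Möbius function `μ(F, univ)` in the poset of rightmost sets, a product of chains: it is
`(-1) ^ |Fᶜ|` when `F` misses at most the head of each adjacency and `0` otherwise. -/
noncomputable def weight (F : Finset (Fin n)) : ℤ :=
  if IsNormal π F then (-1) ^ Fᶜ.card else 0

lemma weight_univ : weight π Finset.univ = 1 := by
  simp [weight, IsNormal]

/-- `weight π` satisfies the recursion of the Möbius function `μ(·, univ)` on rightmost sets. -/
lemma sum_weight {F : Finset (Fin n)} (hF : IsRightmost π F) :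
    ∑ G ∈ Finset.univ.filter (fun G => IsRightmost π G ∧ F ⊆ G), weight π G
      = if F = Finset.univ then 1 else 0 := by
  -- the complements of the normal sets above `F` are the sets of heads outside `F`
  have h1 : ∑ G ∈ Finset.univ.filter (fun G => IsRightmost π G ∧ F ⊆ G), weight π G
      = ∑ H ∈ (Finset.univ.filter fun j => ¬ Linked π j ∧ j ∉ F).powerset, (-1 : ℤ) ^ H.card := by
    unfold weight
    rw [← Finset.sum_filter]
    refine Finset.sum_bij' (fun G _ => Gᶜ) (fun H _ => Hᶜ) ?_ ?_ ?_ ?_ ?_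
    · intro G hG
      simp only [Finset.mem_filter, Finset.mem_univ, true_and, Finset.mem_powerset] at hG ⊢
      intro j hj
      simp only [Finset.mem_filter, Finset.mem_univ, true_and, Finset.mem_compl] at hj ⊢
      exact ⟨fun hl => hj (hG.2 j hl), fun h => hj (hG.1.2 h)⟩
    · intro H hH
      simp only [Finset.mem_filter, Finset.mem_univ, true_and, Finset.mem_powerset] at hH ⊢
      have hH' : ∀ j ∈ H, ¬ Linked π j ∧ j ∉ F := fun j hj => by simpa using hH hj
      have hN : IsNormal π Hᶜ := fun j hl => Finset.mem_compl.2 fun hj => (hH' j hj).1 hl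
      exact ⟨⟨hN.isRightmost π, fun j hj => Finset.mem_compl.2 fun h => (hH' j h).2 hj⟩, hN⟩
    · simp
    · simp
    · simp
  rw [h1, Finset.sum_powerset_neg_one_pow_card]
  refine if_congr ⟨fun h => hF.eq_univ π fun j hj => ?_, fun h => by simp [h]⟩ rfl rfl
  by_contra hjF
  have : j ∈ (∅ : Finset (Fin n)) := by
    rw [← h]
    simp [hj, hjF]
  simp at this

lemma EhatMem.card {p : PermPat} {E : Finset (Fin n)} (h : EhatMem p π E) : E.card = p.1 :=
  congrArg Sigma.fst h.1

/-- The rightmost embeddings of `p`. -/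
noncomputable def Ehat (p : PermPat) : Finset (Finset (Fin n)) :=
  Finset.univ.filter fun E => EhatMem p π E

/-- The rightmost sets containing some rightmost embedding of `p`. -/
noncomputable def upSets (p : PermPat) : Finset (Finset (Fin n)) :=
  Finset.univ.filter fun F => IsRightmost π F ∧ ∃ E, EhatMem p π E ∧ E ⊆ F

/-- Among rightmost embeddings, `weight π` is supported on the normal ones, each of which has
`n - |p|` zero entries. -/
lemma sum_Ehat_weight (p : PermPat) :
    ∑ E ∈ Ehat π p, weight π E = (-1 : ℤ) ^ (n - p.1) * (NE p π : ℤ) := by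
  have h2 : NE p π = ((Ehat π p).filter fun E => IsNormal π E).card := by
    unfold NE
    rw [← Set.ncard_coe_finset]
    congr 1
    ext E
    rw [Finset.mem_coe, Finset.mem_filter, Ehat, Finset.mem_filter, Set.mem_ofPred_eq]
    simp only [Finset.mem_univ, true_and]
    exact ⟨fun h => ⟨⟨h.1, h.2.isRightmost π⟩, h.2⟩, fun h => ⟨h.1.1, h.2⟩⟩
  unfold weight
  rw [← Finset.sum_filter, h2, Finset.sum_congr rfl (g := fun _ => (-1 : ℤ) ^ (n - p.1))]
  · simp [mul_comm]
  · intro E hE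
    simp only [Ehat, Finset.mem_filter, Finset.mem_univ, true_and] at hE
    rw [Finset.card_compl, Fintype.card_fin, hE.1.card π]

/-- Inclusion–exclusion over the principal up-sets `{F ⊇ E}`: the intersection of those with
`E ∈ S` is the up-set of `⋃ S`, whose total weight is `1` when `⋃ S` is everything and `0`
otherwise. -/
lemma sum_upSets_weight (p : PermPat) : ∑ F ∈ upSets π p, weight π F = - EZsum p π := by
  -- the nonempty sets of embeddings below a fixed `F` have alternating sum `-1`, or `0` if there
  -- is no embedding below `F`
  have h1 : ∀ F : Finset (Fin n),
      ∑ S ∈ (Ehat π p).powerset.filter (fun S => S.Nonempty ∧ S.biUnion id ⊆ F), (-1 : ℤ) ^ S.card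
        = if (∃ E, EhatMem p π E ∧ E ⊆ F) then -1 else 0 := by
    intro F
    have hs : (Ehat π p).powerset.filter (fun S => S.Nonempty ∧ S.biUnion id ⊆ F)
        = ((Ehat π p).filter fun E => E ⊆ F).powerset.erase ∅ := by
      ext S
      simp only [Finset.mem_filter, Finset.mem_powerset, Finset.mem_erase,
        Finset.biUnion_subset, id, Finset.subset_iff (s₁ := S), Finset.nonempty_iff_ne_empty]
      constructor
      · exact fun h => ⟨h.2.1, fun E hE => ⟨h.1 hE, h.2.2 E hE⟩⟩
      · exact fun h => ⟨fun E hE => (h.2 hE).1, h.1, fun E hE => (h.2 hE).2⟩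
    have he := Finset.sum_erase_add ((Ehat π p).filter fun E => E ⊆ F).powerset
      (fun S => (-1 : ℤ) ^ S.card) (Finset.empty_mem_powerset _)
    rw [Finset.sum_powerset_neg_one_pow_card, Finset.card_empty, pow_zero] at he
    rw [hs]
    have hiff : ((Ehat π p).filter fun E => E ⊆ F) = ∅ ↔ ¬ ∃ E, EhatMem p π E ∧ E ⊆ F := by
      simp [Finset.filter_eq_empty_iff, Ehat]
    by_cases hx : ∃ E, EhatMem p π E ∧ E ⊆ F
    · rw [if_pos hx]
      rw [if_neg (fun h => (hiff.1 h) hx)] at he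
      linarith
    · rw [if_neg hx]
      rw [if_pos (hiff.2 hx)] at he
      linarith
  have h2 : ∑ F ∈ upSets π p, weight π F
      = - ∑ F ∈ Finset.univ.filter (fun F => IsRightmost π F),
          ∑ S ∈ (Ehat π p).powerset.filter (fun S => S.Nonempty),
            if S.biUnion id ⊆ F then (-1 : ℤ) ^ S.card * weight π F else 0 := by
    have : upSets π p = (Finset.univ.filter fun F => IsRightmost π F).filter
        fun F => ∃ E, EhatMem p π E ∧ E ⊆ F := by
      rw [Finset.filter_filter]
      rfl
    rw [this, Finset.sum_filter, ← Finset.sum_neg_distrib]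
    refine Finset.sum_congr rfl fun F _ => ?_
    rw [← Finset.sum_filter, Finset.filter_filter, ← Finset.sum_mul, h1 F]
    split_ifs <;> simp
  rw [h2, Finset.sum_comm]
  congr 1
  have h3 : EZsum p π = ∑ S ∈ (Ehat π p).powerset.filter (fun S => S.Nonempty),
      if S.biUnion id = Finset.univ then (-1 : ℤ) ^ S.card else 0 := by
    rw [← Finset.sum_filter, Finset.filter_filter]
    unfold EZsum
    refine Finset.sum_congr ?_ fun _ _ => rfl
    ext S
    rw [Finset.mem_filter]
    simp only [EZmem, Finset.mem_filter, Finset.mem_univ, true_and, Finset.mem_powerset,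
      Finset.subset_iff, Ehat, Finset.eq_univ_iff_forall, Finset.mem_biUnion, id]
    tauto
  rw [h3]
  refine Finset.sum_congr rfl fun S hS => ?_
  have hr : IsRightmost π (S.biUnion id) := by
    intro i j hb hij hi
    simp only [Finset.mem_filter, Finset.mem_powerset, Finset.mem_biUnion, id] at hi hS ⊢
    obtain ⟨E, hE, hiE⟩ := hi
    have hE' := hS.1 hE
    simp only [Ehat, Finset.mem_filter, Finset.mem_univ, true_and] at hE'
    exact ⟨E, hE, hE'.2 i j hb hij hiE⟩
  have := sum_weight π hr
  rw [← Finset.filter_filter] at this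
  rw [← Finset.sum_filter, ← Finset.mul_sum, this]
  split_ifs <;> simp

lemma exists_Ehat {p : PermPat} (h : PatLe p ⟨n, π⟩) : ∃ E, EhatMem p π E := by
  obtain ⟨f, hf⟩ := h
  obtain ⟨D, -, hD⟩ := exists_patternOf_eq π (F := Finset.univ) f f.strictMono (by simp) hf
  obtain ⟨E, hE, hp, -⟩ := exists_rightmost π D
  exact ⟨E, hp.trans hD, hE⟩

end Blocks

/-- For `σ < π`,
`μ(A^{σ,π}) = (−1)^{|π|−|σ|}·NE(σ,π) + Σ_{S ∈ EZ^{σ,π}} (−1)^{|S|}`. -/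
theorem mobius_Aspace {k n : ℕ} (σ : Equiv.Perm (Fin k)) (π : Equiv.Perm (Fin n))
    (hle : PatLe ⟨k, σ⟩ ⟨n, π⟩) (hne : (⟨k, σ⟩ : PermPat) ≠ ⟨n, π⟩) :
    muHat ↥(Aspace ⟨k, σ⟩ π) =
      (-1 : ℤ) ^ (n - k) * (NE ⟨k, σ⟩ π : ℤ) + EZsum ⟨k, σ⟩ π := by
  have hkn : k < n := by
    by_contra h
    exact hne (PermPat.eq_of_le_of_len hle (not_lt.1 h))
  set p : PermPat := ⟨k, σ⟩ with hp
  have hnu : ∀ E, EhatMem p π E → E ≠ Finset.univ := by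
    rintro E hE rfl
    have := hE.card π
    simp [hp] at this
    omega
  have hsum : ∀ F ∈ midSets π p,
      ∑ G ∈ (midSets π p).filter (fun G => F ⊆ G), weight π G = -1 := by
    intro F hF
    obtain ⟨hFr, hFu, E, hE, hEF⟩ := (mem_midSets π).1 hF
    have hw := sum_weight π hFr
    have hs : Finset.univ.filter (fun G => IsRightmost π G ∧ F ⊆ G)
        = insert Finset.univ ((midSets π p).filter fun G => F ⊆ G) := by
      ext G
      simp only [Finset.mem_filter, Finset.mem_univ, true_and, Finset.mem_insert, mem_midSets]
      constructor
      · rintro ⟨hG, hFG⟩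
        by_cases hGu : G = Finset.univ
        · exact Or.inl hGu
        · exact Or.inr ⟨⟨hG, hGu, E, hE, hEF.trans_subset hFG⟩, hFG⟩
      · rintro (rfl | h)
        · exact ⟨isRightmost_univ π, Finset.subset_univ _⟩
        · exact ⟨h.1.1, h.2⟩
    rw [hs, Finset.sum_insert (by simp [mem_midSets]), weight_univ, if_neg hFu] at hw
    linarith
  rw [muHat_Aspace_eq_of π p (weight π) hsum]
  -- above the antichain of embeddings lie the middle sets and the full set
  have hup : upSets π p = insert Finset.univ (midSets π p) ∪ Ehat π p := by
    ext F
    simp only [upSets, Ehat, Finset.mem_filter, Finset.mem_univ, true_and, Finset.mem_union,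
      Finset.mem_insert, mem_midSets]
    constructor
    · rintro ⟨hF, E, hE, hEF⟩
      rcases hEF.eq_or_ssubset with rfl | hlt
      · exact Or.inr hE
      · by_cases hFu : F = Finset.univ
        · exact Or.inl (Or.inl hFu)
        · exact Or.inl (Or.inr ⟨hF, hFu, E, hE, hlt⟩)
    · rintro ((rfl | ⟨hF, -, E, hE, hEF⟩) | hF)
      · obtain ⟨E, hE⟩ := exists_Ehat π hle
        exact ⟨isRightmost_univ π, E, hE, Finset.subset_univ _⟩
      · exact ⟨hF, E, hE, hEF.1⟩
      · exact ⟨hF.2, F, hF, Finset.Subset.refl _⟩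
  have hdisj : Disjoint (insert Finset.univ (midSets π p)) (Ehat π p) := by
    rw [Finset.disjoint_left]
    intro F hF hE
    simp only [Ehat, Finset.mem_filter, Finset.mem_univ, true_and] at hE
    rcases Finset.mem_insert.1 hF with rfl | hF
    · exact hnu _ hE rfl
    · obtain ⟨-, -, E, hE', hlt⟩ := (mem_midSets π).1 hF
      have := Finset.card_lt_card hlt
      rw [hE.card π, hE'.card π] at this
      exact lt_irrefl _ this
  have h1 := sum_upSets_weight π p
  have h2 := sum_Ehat_weight π p
  rw [hup, Finset.sum_union hdisj, Finset.sum_insert (by simp [mem_midSets]), weight_univ, h2] at h1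
  simp only [hp] at h1 ⊢
  linarith
end

section
/- If σ ≤ π are permutations with the same number of descents, then μ(σ,π) = (−1)^{|π|−|σ|}·NE(σ,π); in particular the second term of the two-term Möbius function formula vanishes in this case. -/
/-!
Among permutations with a fixed number of descents the pattern order is the subword order, and the
theorem is the analogue of Björner's formula for the Möbius function of subword order.

Read the letters of `π` by increasing value and write down, for each, the index of the ascending
run of `π` containing it; this gives a word. If `z ≤ π` have equally many descents, every
occurrence of `z` in `π` respects run indices (`IsOcc.runIdx_eq`), so occurrences of `z` in `π`
within a set `E` of positions correspond to embeddings of the word of `z` in the word of `π`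
restricted to `E` (`runWord_sublist_iff`). An increasing link of `π` is a pair of equal
neighbouring letters of its word. The lower position of a decreasing link belongs to every set `E`
supporting such an occurrence (`IsOcc.mem_range_of_desc`), so decreasing links impose no further
condition, and normality of `E` says that every letter of the word equal to its predecessor is
kept (`isNormal_iff_of_occ`).

The combinatorial core is `altSum_subInd`: the sum of `(-1)^{|E|}` over the normal choices `E` of
letters of `w` whose word contains `u` is `0` for `u ≠ w` and `(-1)^{|w|}` for `u = w`. If `u` is
empty or its first letter is not that of `w`, keeping and deleting the first letter of `w` cancel;
otherwise this common letter can be removed from both words, and one inducts. For permutations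
this becomes `sum_normal_above`: `∑_{E normal, z ≤ π|_E} (-1)^{|E|}` is `0` for `z < π` and
`(-1)^{|π|}` for `z = π`.

Evaluating the double sum of `μ(σ,z) (-1)^{|E|}` over `σ ≤ z ≤ π|_E`, `E` normal, in both orders
finishes the proof: summing over `E` first gives `(-1)^{|π|} μ(σ,π)`, and summing over `z` first
gives `(-1)^{|σ|} NE(σ,π)`, by the defining recursion of `μ` (`sum_permMu`).
-/

open scoped Classical

set_option maxHeartbeats 1000000

/-! ### Words: an alternating sum over normal subwords -/

/-- The signed sum of `(-1)^{|v|} φ v` over the subwords `v` of a word obtained by choosing a set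
of letters to keep, where a letter equal to its predecessor must be kept. The first argument is
the letter preceding the word, if there is one. -/
def altSum : Option ℕ → (List ℕ → ℤ) → List ℕ → ℤ
  | _, φ, [] => φ []
  | c, φ, a :: w => (if c = some a then 0 else altSum (some a) φ w)
      - altSum (some a) (fun v => φ (a :: v)) w

/-- The indicator function of the words containing `u` as a subword. -/
noncomputable def subInd (u v : List ℕ) : ℤ := if u.Sublist v then 1 else 0

lemma altSum_none_of_head_ne {a c : ℕ} (h : a ≠ c) (φ : List ℕ → ℤ) (w : List ℕ) :
    altSum (some a) φ (c :: w) = altSum none φ (c :: w) := by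
  simp [altSum, h]

lemma subInd_nil_cons (a : ℕ) : (fun v => subInd [] (a :: v)) = subInd [] := by
  funext v; simp [subInd]

lemma subInd_cons_self (a : ℕ) (u : List ℕ) :
    (fun v => subInd (a :: u) (a :: v)) = subInd u := by
  funext v; simp [subInd]

lemma subInd_cons_ne {a b : ℕ} (h : b ≠ a) (u : List ℕ) :
    (fun v => subInd (b :: u) (a :: v)) = subInd (b :: u) := by
  funext v
  have : (b :: u).Sublist (a :: v) ↔ (b :: u).Sublist v := by
    rw [List.sublist_cons_iff]; simp [h]
  simp [subInd, this]

/-- The inversion of the subword order. If `u` is empty or the first letters of `u` and `w`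
differ, the terms with and without the first letter of `w` cancel; if they agree, that letter can
be removed from both words. -/
lemma altSum_subInd (w : List ℕ) : ∀ u : List ℕ,
    altSum none (subInd u) w = if u = w then (-1) ^ w.length else 0 := by
  induction w with
  | nil => intro u; simp [altSum, subInd]
  | cons a w ih =>
    intro u
    rw [altSum, if_neg (by simp)]
    rcases u with _ | ⟨b, u⟩
    · rw [subInd_nil_cons]; simp
    by_cases hb : b = a
    swap
    · rw [subInd_cons_ne hb]; simp [hb]
    subst hb
    rw [subInd_cons_self]
    have key : altSum (some b) (subInd (b :: u)) w - altSum (some b) (subInd u) w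
        = - altSum none (subInd u) w := by
      rcases w with _ | ⟨c, w⟩
      · simp [altSum, subInd]
      by_cases hc : b = c
      · -- here the first letter of the remaining word must be kept on both sides
        subst hc
        simp only [altSum, subInd_cons_self, if_true, reduceCtorEq, if_false]
        ring
      · rw [altSum_none_of_head_ne hc, altSum_none_of_head_ne hc, ih (b :: u)]
        simp [hc]
    rw [key, ih u]
    by_cases hu : u = w
    · subst hu; simp [pow_succ]
    · simp [hu]

/-- `NormalOn ℓ E c L`: along the list `L`, every entry whose `ℓ`-label equals that of its
predecessor belongs to `E`; `c` is the label preceding the list, if there is one. -/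
def NormalOn {α : Type*} (ℓ : α → ℕ) (E : Finset α) : Option ℕ → List α → Prop
  | _, [] => True
  | c, a :: L => (c = some (ℓ a) → a ∈ E) ∧ NormalOn ℓ E (some (ℓ a)) L

lemma NormalOn.congr {α : Type*} {ℓ : α → ℕ} {E F : Finset α} {L : List α} :
    ∀ {c}, (∀ a ∈ L, a ∈ E ↔ a ∈ F) → (NormalOn ℓ E c L ↔ NormalOn ℓ F c L) := by
  induction L with
  | nil => intro c _; simp [NormalOn]
  | cons a L ih =>
    intro c h
    simp only [NormalOn]
    rw [h a (by simp), ih (fun b hb => h b (by simp [hb]))]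

lemma normalOn_some_iff {α : Type*} {ℓ : α → ℕ} {E : Finset α} {L : List α} : ∀ {a : α},
    NormalOn ℓ E (some (ℓ a)) L ↔
      (a :: L).IsChain (fun p q => ℓ p = ℓ q → q ∈ E) := by
  induction L with
  | nil => intro a; simp [NormalOn]
  | cons b L ih =>
    intro a
    rw [List.isChain_cons_cons, ← ih]
    simp [NormalOn]

lemma normalOn_none_iff {α : Type*} {ℓ : α → ℕ} {E : Finset α} {L : List α} :
    NormalOn ℓ E none L ↔ L.IsChain (fun p q => ℓ p = ℓ q → q ∈ E) := by
  cases L with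
  | nil => simp [NormalOn]
  | cons b L => rw [← normalOn_some_iff]; simp [NormalOn]

/-- The alternating sum over words is a sum over the sets `E` of kept positions. -/
lemma sum_normalOn {α : Type*} [DecidableEq α] (ℓ : α → ℕ) (L : List α) :
    ∀ (φ : List ℕ → ℤ) (c : Option ℕ), L.Nodup →
    ∑ E ∈ L.toFinset.powerset, (if NormalOn ℓ E c L then
      (-1) ^ E.card * φ ((L.filter (· ∈ E)).map ℓ) else 0) = altSum c φ (L.map ℓ) := by
  induction L with
  | nil => intro φ c _; simp [altSum, NormalOn]
  | cons a L ih =>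
    intro φ c hnd
    obtain ⟨ha, hnd⟩ := List.nodup_cons.mp hnd
    have ha' : a ∉ L.toFinset := by simpa using ha
    rw [List.toFinset_cons, Finset.sum_powerset_insert ha', List.map_cons, altSum,
      sub_eq_add_neg, ← ih φ _ hnd, ← ih _ _ hnd, ← Finset.sum_neg_distrib]
    congr 1
    · split_ifs with hc
      · apply Finset.sum_eq_zero
        intro E hE
        have haE : a ∉ E := fun h => ha' (Finset.mem_powerset.mp hE h)
        simp [NormalOn, hc, haE]
      · apply Finset.sum_congr rfl
        intro E hE
        have haE : a ∉ E := fun h => ha' (Finset.mem_powerset.mp hE h)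
        simp [NormalOn, hc, haE]
    · apply Finset.sum_congr rfl
      intro E hE
      have haE : a ∉ E := fun h => ha' (Finset.mem_powerset.mp hE h)
      have hmem : ∀ b ∈ L, b ∈ insert a E ↔ b ∈ E := by
        intro b hb
        have : b ≠ a := fun h => ha (h ▸ hb)
        simp [this]
      have h1 : L.filter (· ∈ insert a E) = L.filter (· ∈ E) :=
        List.filter_congr (fun b hb => by simp only [hmem b hb])
      rw [List.filter_cons_of_pos (by simp), h1, Finset.card_insert_of_notMem haE]
      simp only [NormalOn, Finset.mem_insert_self, implies_true, true_and,
        NormalOn.congr hmem, List.map_cons]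
      split_ifs
      · ring
      · simp

/-! ### Descents and ascending runs -/

/-- The set of descents of a permutation. -/
noncomputable def desSet {n : ℕ} (π : Equiv.Perm (Fin n)) : Finset (Fin n) :=
  Finset.univ.filter fun j : Fin n => ∃ h : j.val + 1 < n, π ⟨j.val + 1, h⟩ < π j

/-- The index (from `0`) of the ascending run of `π` containing position `j`. -/
noncomputable def runIdx {n : ℕ} (π : Equiv.Perm (Fin n)) (j : Fin n) : ℕ :=
  ((desSet π).filter (· < j)).card

lemma mem_desSet {n : ℕ} {π : Equiv.Perm (Fin n)} {j : Fin n} :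
    j ∈ desSet π ↔ ∃ h : j.val + 1 < n, π ⟨j.val + 1, h⟩ < π j := by simp [desSet]

lemma runIdx_mono {n : ℕ} (π : Equiv.Perm (Fin n)) {i j : Fin n} (h : i ≤ j) :
    runIdx π i ≤ runIdx π j :=
  Finset.card_le_card fun m hm => by
    simp only [Finset.mem_filter] at hm ⊢
    exact ⟨hm.1, hm.2.trans_le h⟩

lemma runIdx_lt {n : ℕ} {π : Equiv.Perm (Fin n)} {i j m : Fin n} (hm : m ∈ desSet π)
    (h1 : i ≤ m) (h2 : m < j) : runIdx π i < runIdx π j := by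
  apply Finset.card_lt_card
  rw [Finset.ssubset_iff_of_subset]
  · exact ⟨m, by simp [hm, h2], by simp [h1]⟩
  · intro x hx
    simp only [Finset.mem_filter] at hx ⊢
    exact ⟨hx.1, hx.2.trans_le (h1.trans h2.le)⟩

lemma exists_desSet {n : ℕ} {π : Equiv.Perm (Fin n)} {p q : Fin n} (hpq : p < q)
    (h : π q < π p) : ∃ m ∈ desSet π, p ≤ m ∧ m < q := by
  by_contra! hno
  have main : ∀ d : ℕ, ∀ hd : p.val + d < n, p.val + d ≤ q.val → π p ≤ π ⟨p.val + d, hd⟩ := by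
    intro d
    induction d with
    | zero => intro _ _; exact le_refl _
    | succ d ih =>
      intro hd hle
      refine (ih (by omega) (by omega)).trans ?_
      by_contra! hlt
      have := hno ⟨p.val + d, by omega⟩ (mem_desSet.mpr ⟨hd, hlt⟩) (by simp [Fin.le_def])
      simp only [Fin.le_def] at this
      omega
  have h1 : p.val < q.val := hpq
  have := main (q.val - p.val) (by omega) (by omega)
  have e : (⟨p.val + (q.val - p.val), by omega⟩ : Fin n) = q := Fin.ext (by simp; omega)
  rw [e] at this
  exact absurd h (not_lt.mpr this)

lemma lt_iff_of_runIdx_eq {n : ℕ} {π : Equiv.Perm (Fin n)} {p q : Fin n}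
    (h : runIdx π p = runIdx π q) : π p < π q ↔ p < q := by
  have main : ∀ {p q : Fin n}, runIdx π p = runIdx π q → p < q → π p < π q := by
    intro p q h hpq
    by_contra! hle
    have hlt : π q < π p := lt_of_le_of_ne hle (fun e => hpq.ne' (π.injective e))
    obtain ⟨m, hm, h1, h2⟩ := exists_desSet hpq hlt
    exact absurd h (runIdx_lt hm h1 h2).ne
  refine ⟨fun hlt => ?_, main h⟩
  by_contra! hle
  rcases hle.eq_or_lt with rfl | hlt'
  · exact lt_irrefl _ hlt
  · exact lt_asymm hlt (main h.symm hlt')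

/-- An occurrence of `z` in `π`, as an increasing map of positions. -/
def IsOcc {k n : ℕ} (z : Equiv.Perm (Fin k)) (π : Equiv.Perm (Fin n))
    (f : Fin k ↪o Fin n) : Prop :=
  ∀ i j, z i < z j ↔ π (f i) < π (f j)

/-- Each descent of `z` yields a descent of `π` between the images of the two letters; these are
distinct because the intervals between images of consecutive positions are disjoint. -/
lemma IsOcc.exists_desMap {k n : ℕ} {z : Equiv.Perm (Fin k)} {π : Equiv.Perm (Fin n)}
    {f : Fin k ↪o Fin n} (hf : IsOcc z π f) :
    ∃ g : Fin k → Fin n, Set.InjOn g (desSet z) ∧ ∀ i ∈ desSet z, g i ∈ desSet π ∧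
      f i ≤ g i ∧ ∀ j, i < j → g i < f j := by
  have h : ∀ i : Fin k, ∃ m : Fin n, i ∈ desSet z → m ∈ desSet π ∧ f i ≤ m ∧
      ∀ j, i < j → m < f j := by
    intro i
    by_cases hi : i ∈ desSet z
    · obtain ⟨h, hlt⟩ := mem_desSet.mp hi
      obtain ⟨m, hm, h1, h2⟩ := exists_desSet (π := π) (p := f i) (q := f ⟨i.val + 1, h⟩)
        (f.strictMono (by simp [Fin.lt_def])) ((hf _ _).mp hlt)
      refine ⟨m, fun _ => ⟨hm, h1, fun j hj => h2.trans_le (f.monotone ?_)⟩⟩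
      simp only [Fin.le_def, Fin.lt_def] at hj ⊢
      omega
    · exact ⟨f i, fun h => absurd h hi⟩
  choose g hg using h
  refine ⟨g, ?_, hg⟩
  intro i hi j hj hij
  rcases lt_trichotomy i j with hlt | rfl | hlt
  · exact absurd hij (((hg i hi).2.2 j hlt).trans_le (hg j hj).2.1).ne
  · rfl
  · exact absurd hij (((hg j hj).2.2 i hlt).trans_le (hg i hi).2.1).ne'

lemma IsOcc.desNum_le {k n : ℕ} {z : Equiv.Perm (Fin k)} {π : Equiv.Perm (Fin n)}
    {f : Fin k ↪o Fin n} (hf : IsOcc z π f) : desNum z ≤ desNum π := by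
  obtain ⟨g, hinj, hg⟩ := hf.exists_desMap
  exact Finset.card_le_card_of_injOn g (fun i hi => (hg i hi).1) hinj

lemma PatLe.desNum_le {p q : PermPat} (h : PatLe p q) : desNum p.2 ≤ desNum q.2 := by
  obtain ⟨f, hf⟩ := h
  exact IsOcc.desNum_le (f := f) hf

/-- When the numbers of descents agree, an occurrence maps each ascending run into the run with
the same index: both the descents before and those after a position can only increase in
number. -/
lemma IsOcc.runIdx_eq {k n : ℕ} {z : Equiv.Perm (Fin k)} {π : Equiv.Perm (Fin n)}
    {f : Fin k ↪o Fin n} (hf : IsOcc z π f) (hd : desNum z = desNum π) (i : Fin k) :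
    runIdx π (f i) = runIdx z i := by
  obtain ⟨g, hinj, hg⟩ := hf.exists_desMap
  have h1 : runIdx z i ≤ runIdx π (f i) := by
    refine Finset.card_le_card_of_injOn g (fun m hm => ?_) (hinj.mono fun m hm =>
      (Finset.mem_filter.mp (Finset.mem_coe.mp hm)).1)
    simp only [Finset.coe_filter, Set.mem_ofPred_eq] at hm
    simp only [Finset.coe_filter, Set.mem_ofPred_eq]
    exact ⟨(hg m hm.1).1, (hg m hm.1).2.2 i hm.2⟩
  have h2 : ((desSet z).filter (¬ · < i)).card ≤ ((desSet π).filter (¬ · < f i)).card := by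
    refine Finset.card_le_card_of_injOn g (fun m hm => ?_) (hinj.mono fun m hm =>
      (Finset.mem_filter.mp (Finset.mem_coe.mp hm)).1)
    simp only [Finset.coe_filter, Set.mem_ofPred_eq, not_lt] at hm
    simp only [Finset.coe_filter, Set.mem_ofPred_eq, not_lt]
    exact ⟨(hg m hm.1).1, (f.monotone hm.2).trans (hg m hm.1).2.1⟩
  have e1 := Finset.card_filter_add_card_filter_not (s := desSet z) (· < i)
  have e2 := Finset.card_filter_add_card_filter_not (s := desSet π) (· < f i)
  have e3 : (desSet z).card = (desSet π).card := hd
  unfold runIdx at *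
  omega

/-- When the numbers of descents agree, an occurrence uses the bottom letter of every descent
whose two letters have consecutive values. -/
lemma IsOcc.mem_range_of_desc {k n : ℕ} {z : Equiv.Perm (Fin k)} {π : Equiv.Perm (Fin n)}
    {f : Fin k ↪o Fin n} (hf : IsOcc z π f) (hd : desNum z = desNum π) {p j : Fin n}
    (hpj : p.val + 1 = j.val) (hv : (π j).val + 1 = (π p).val) : ∃ i, f i = j := by
  obtain ⟨g, hinj, hg⟩ := hf.exists_desMap
  have hp : p ∈ desSet π := by
    have e : (⟨p.val + 1, by omega⟩ : Fin n) = j := Fin.ext hpj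
    refine mem_desSet.mpr ⟨by omega, ?_⟩
    rw [e, Fin.lt_def]; omega
  have hsurj := Finset.surjOn_of_injOn_of_card_le g (fun i hi => (hg i hi).1) hinj
    (le_of_eq (show (desSet π).card = (desSet z).card from hd.symm))
  obtain ⟨i, hi, hgi⟩ := hsurj hp
  replace hi : i ∈ desSet z := hi
  obtain ⟨hk, hlt⟩ := mem_desSet.mp hi
  set i' : Fin k := ⟨i.val + 1, hk⟩ with hi'
  have hii' : i < i' := by simp [hi', Fin.lt_def]
  have h1 : f i ≤ p := hgi ▸ (hg i hi).2.1
  have h2 : p < f i' := hgi ▸ (hg i hi).2.2 i' hii'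
  have hj : j ≤ f i' := by rw [Fin.lt_def] at h2; rw [Fin.le_def]; omega
  have hpj' : p < j := by rw [Fin.lt_def]; omega
  refine ⟨i', ?_⟩
  by_contra hne
  have hjlt : j < f i' := lt_of_le_of_ne hj (Ne.symm hne)
  -- the run index increases by exactly one from `i` to `i'`, and at least by one from `p` to `j`
  have r1 : runIdx z i' ≤ runIdx z i + 1 := by
    unfold runIdx
    refine (Finset.card_le_card (t := insert i ((desSet z).filter (· < i))) ?_).trans
      (Finset.card_insert_le _ _)
    intro m hm
    simp only [Finset.mem_filter, Finset.mem_insert] at hm ⊢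
    have : m.val < i.val + 1 := hm.2
    rcases eq_or_ne m i with h | h
    · exact Or.inl h
    · refine Or.inr ⟨hm.1, ?_⟩
      have : m.val ≠ i.val := fun e => h (Fin.ext e)
      rw [Fin.lt_def]; omega
  have r2 := hf.runIdx_eq hd i
  have r3 := hf.runIdx_eq hd i'
  have r4 := runIdx_mono π h1
  have r5 := runIdx_mono π hj
  have r6 := runIdx_lt hp le_rfl hpj'
  have a1 : π j < π (f i') := (lt_iff_of_runIdx_eq (by omega)).mpr hjlt
  have a2 : π (f i) ≤ π p := by
    rcases h1.eq_or_lt with h | h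
    · rw [h]
    · exact ((lt_iff_of_runIdx_eq (by omega)).mpr h).le
  have a3 := (hf _ _).mp hlt
  rw [Fin.lt_def] at a1 a3
  rw [Fin.le_def] at a2
  omega

/-! ### The word of a permutation -/

/-- The positions of `π`, listed by increasing value of their letters. -/
def posList {n : ℕ} (π : Equiv.Perm (Fin n)) : List (Fin n) := List.ofFn fun v => π.symm v

/-- The word of `π` restricted to a set `E` of positions: the run indices in `π` of the letters
in `E`, listed by increasing value. -/
noncomputable def runWord {n : ℕ} (π : Equiv.Perm (Fin n)) (E : Finset (Fin n)) : List ℕ :=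
  ((posList π).filter (· ∈ E)).map (runIdx π)

lemma posList_pairwise {n : ℕ} (π : Equiv.Perm (Fin n)) :
    (posList π).Pairwise (fun p q => π p < π q) := by
  simp [posList, List.pairwise_ofFn]

lemma mem_posList {n : ℕ} (π : Equiv.Perm (Fin n)) (p : Fin n) : p ∈ posList π := by
  simp only [posList, List.mem_ofFn]
  exact ⟨π p, by simp⟩

lemma nodup_posList {n : ℕ} (π : Equiv.Perm (Fin n)) : (posList π).Nodup :=
  List.nodup_ofFn.mpr π.symm.injective

lemma runWord_univ {n : ℕ} (π : Equiv.Perm (Fin n)) :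
    runWord π Finset.univ = (posList π).map (runIdx π) := by simp [runWord]

/-- Among permutations with equally many descents, pattern containment is the subword order on
words. -/
lemma runWord_sublist_iff {k n : ℕ} {z : Equiv.Perm (Fin k)} {π : Equiv.Perm (Fin n)}
    (hd : desNum z = desNum π) (E : Finset (Fin n)) :
    (runWord z Finset.univ).Sublist (runWord π E) ↔
      ∃ f : Fin k ↪o Fin n, IsOcc z π f ∧ ∀ i, f i ∈ E := by
  rw [runWord_univ, runWord]
  constructor
  · intro h
    obtain ⟨l, hl, he⟩ := List.sublist_map_iff.mp h
    have hlen : l.length = k := by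
      have := congrArg List.length he
      simpa [posList] using this.symm
    have hpw : l.Pairwise (fun p q => π p < π q) :=
      ((posList_pairwise π).filter _).sublist hl
    have hrun : ∀ v : Fin k, runIdx π (l[v.val]'(by omega)) = runIdx z (z.symm v) := by
      intro v
      have := congrArg (fun L : List ℕ => L[v.val]?) he
      simp [posList, hlen] at this
      exact this.symm
    have hval : StrictMono fun v : Fin k => π (l[v.val]'(by omega)) := fun v w hvw =>
      List.pairwise_iff_getElem.mp hpw v.val w.val (by omega) (by omega) hvw
    have hlt : StrictMono fun i : Fin k => l[(z i).val]'(by omega) := by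
      intro i j hij
      change l[(z i).val]'(by omega) < l[(z j).val]'(by omega)
      have e1 := hrun (z i)
      have e2 := hrun (z j)
      simp only [Equiv.symm_apply_apply] at e1 e2
      rcases (runIdx_mono z hij.le).eq_or_lt with h | h
      · exact (lt_iff_of_runIdx_eq (by omega)).mp (hval ((lt_iff_of_runIdx_eq h).mpr hij))
      · by_contra! hle
        have := runIdx_mono π hle
        omega
    refine ⟨OrderEmbedding.ofStrictMono _ hlt, fun i j => ?_, fun i => ?_⟩
    · simpa using (hval.lt_iff_lt (a := z i) (b := z j)).symm
    · have : l[(z i).val]'(by omega) ∈ (posList π).filter (· ∈ E) :=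
        hl.subset (List.getElem_mem _)
      simpa using (List.mem_filter.mp this).2
  · rintro ⟨f, hf, hE⟩
    have e : (posList z).map (runIdx z) = ((posList z).map f).map (runIdx π) := by
      rw [List.map_map]
      exact List.map_congr_left fun i _ => (hf.runIdx_eq hd i).symm
    rw [e]
    apply List.Sublist.map
    have : Std.Antisymm (fun p q : Fin n => π p ≤ π q) :=
      ⟨fun p q h1 h2 => π.injective (le_antisymm h1 h2)⟩
    refine List.sublist_of_subperm_of_pairwise (r := fun p q : Fin n => π p ≤ π q) ?_ ?_ ?_
    · apply List.subperm_of_subset ((nodup_posList z).map f.injective)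
      intro p hp
      obtain ⟨i, -, rfl⟩ := List.mem_map.mp hp
      simp [mem_posList, hE]
    · exact List.pairwise_map.mpr ((posList_pairwise z).imp fun h => ((hf _ _).mp h).le)
    · exact ((posList_pairwise π).filter _).imp fun h => h.le

lemma runWord_univ_eq_iff {k n : ℕ} {z : Equiv.Perm (Fin k)} {π : Equiv.Perm (Fin n)}
    (hd : desNum z = desNum π) :
    runWord z Finset.univ = runWord π Finset.univ ↔ (⟨k, z⟩ : PermPat) = ⟨n, π⟩ := by
  constructor
  · intro h
    obtain ⟨f, hf, -⟩ := (runWord_sublist_iff hd Finset.univ).mp (by rw [h])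
    obtain ⟨g, hg, -⟩ := (runWord_sublist_iff hd.symm Finset.univ).mp (by rw [h])
    exact patLe_antisymm ⟨f, hf⟩ ⟨g, hg⟩
  · intro h
    cases h
    rfl

lemma patLe_patternOf_iff {n : ℕ} (p : PermPat) (π : Equiv.Perm (Fin n)) (E : Finset (Fin n)) :
    PatLe p (patternOf π E) ↔ ∃ f : Fin p.1 ↪o Fin n, IsOcc p.2 π f ∧ ∀ i, f i ∈ E := by
  constructor
  · rintro ⟨f, hf⟩
    refine ⟨f.trans (E.orderEmbOfFin rfl), fun i j => ?_, fun i => ?_⟩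
    · rw [hf i j]
      exact stdize_lt_iff _ _ _ _
    · exact E.orderEmbOfFin_mem rfl _
  · rintro ⟨f, hf, hE⟩
    have hmono : StrictMono fun i => (E.orderIsoOfFin rfl).symm ⟨f i, hE i⟩ := by
      intro i j hij
      simp [hij]
    refine ⟨OrderEmbedding.ofStrictMono _ hmono, fun i j => ?_⟩
    rw [hf i j]
    refine Iff.trans ?_ (stdize_lt_iff _ _ _ _).symm
    change _ ↔ π (E.orderIsoOfFin rfl ((E.orderIsoOfFin rfl).symm ⟨f i, hE i⟩))
      < π (E.orderIsoOfFin rfl ((E.orderIsoOfFin rfl).symm ⟨f j, hE j⟩))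
    simp only [OrderIso.apply_symm_apply]

lemma patternOf_le {n : ℕ} (π : Equiv.Perm (Fin n)) (E : Finset (Fin n)) :
    PatLe (patternOf π E) ⟨n, π⟩ := by
  obtain ⟨f, hf, -⟩ := (patLe_patternOf_iff _ π E).mp (patLe_refl _)
  exact ⟨f, hf⟩

/-- For a set `E` of positions whose pattern contains some `z` with as many descents as `π`,
normality refers only to the word of `π`: the bottom of a descent between consecutive values lies
in `E` anyway, and the remaining links are between equal neighbouring letters of the word. -/
lemma isNormal_iff_of_occ {k n : ℕ} {z : Equiv.Perm (Fin k)} {π : Equiv.Perm (Fin n)}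
    (hd : desNum z = desNum π) {E : Finset (Fin n)} {f : Fin k ↪o Fin n} (hf : IsOcc z π f)
    (hE : ∀ i, f i ∈ E) : IsNormal π E ↔ NormalOn (runIdx π) E none (posList π) := by
  rw [normalOn_none_iff, List.isChain_iff_getElem]
  simp only [posList, List.length_ofFn, List.getElem_ofFn]
  constructor
  · intro h v hv hrun
    set p := π.symm ⟨v, by omega⟩ with hp
    set q := π.symm ⟨v + 1, hv⟩ with hq
    have hπp : π p = ⟨v, by omega⟩ := by simp [hp]
    have hπq : π q = ⟨v + 1, hv⟩ := by simp [hq]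
    have hpq : p < q := (lt_iff_of_runIdx_eq hrun).mp (by rw [hπp, hπq]; simp [Fin.lt_def])
    -- a position strictly between `p` and `q` would carry a value strictly between `v` and `v + 1`
    have hadj : prevPos q = p := by
      by_contra hne
      have hlt : p < prevPos q := by
        refine lt_of_le_of_ne ?_ (Ne.symm hne)
        simp only [prevPos, Fin.le_def, Fin.lt_def] at hpq ⊢
        omega
      have hlt' : prevPos q < q := by
        simp only [prevPos, Fin.lt_def] at hpq ⊢
        omega
      have r1 := runIdx_mono π hlt.le
      have r2 := runIdx_mono π hlt'.le
      have b1 := (lt_iff_of_runIdx_eq (π := π) (p := p) (q := prevPos q) (by omega)).mpr hlt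
      have b2 := (lt_iff_of_runIdx_eq (π := π) (p := prevPos q) (q := q) (by omega)).mpr hlt'
      rw [hπp, Fin.lt_def] at b1
      rw [hπq, Fin.lt_def] at b2
      simp only at b1 b2
      omega
    refine h q ⟨?_, Or.inr ?_⟩
    · rw [Fin.lt_def] at hpq; omega
    · rw [hadj, hπp, hπq]
  · rintro h j ⟨hj0, hj | hj⟩
    · obtain ⟨i, rfl⟩ := hf.mem_range_of_desc hd (p := prevPos j) (j := j)
        (by simp only [prevPos]; omega) hj
      exact hE i
    · have hn : (π (prevPos j)).val + 1 < n := by rw [hj]; exact (π j).isLt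
      have := h (π (prevPos j)).val hn
      have e1 : (⟨(π (prevPos j)).val + 1, hn⟩ : Fin n) = π j := Fin.ext hj
      rw [e1] at this
      simp only [Fin.eta, Equiv.symm_apply_apply] at this
      apply this
      -- no descent lies between the two neighbouring positions
      unfold runIdx
      congr 1
      apply Finset.filter_congr
      intro m hm
      simp only [prevPos, Fin.lt_def]
      refine ⟨fun h => by omega, fun h => ?_⟩
      by_contra hge
      have hmj : m = prevPos j := Fin.ext (by simp only [prevPos]; omega)
      obtain ⟨hm1, hm2⟩ := mem_desSet.mp hm
      have e2 : (⟨m.val + 1, hm1⟩ : Fin n) = j := Fin.ext (by simp only; omega)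
      rw [e2, hmj, Fin.lt_def] at hm2
      omega

/-- The signed count of normal sets of positions whose pattern contains `z` vanishes unless
`z = π`. -/
lemma sum_normal_above {k n : ℕ} {z : Equiv.Perm (Fin k)} {π : Equiv.Perm (Fin n)}
    (hd : desNum z = desNum π) :
    ∑ E : Finset (Fin n), (if IsNormal π E ∧ PatLe ⟨k, z⟩ (patternOf π E) then
      (-1 : ℤ) ^ E.card else 0) = if (⟨k, z⟩ : PermPat) = ⟨n, π⟩ then (-1) ^ n else 0 := by
  have huniv : (posList π).toFinset.powerset = Finset.univ := by
    ext E
    simp [Finset.subset_iff, mem_posList]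
  have h := sum_normalOn (runIdx π) (posList π) (subInd (runWord z Finset.univ)) none
    (nodup_posList π)
  rw [← runWord_univ, altSum_subInd, huniv] at h
  have hlen : (runWord π Finset.univ).length = n := by simp [runWord_univ, posList]
  simp only [hlen, runWord_univ_eq_iff hd] at h
  rw [← h]
  apply Finset.sum_congr rfl
  intro E _
  have e : PatLe ⟨k, z⟩ (patternOf π E) ↔ (runWord z Finset.univ).Sublist (runWord π E) :=
    (patLe_patternOf_iff _ _ _).trans (runWord_sublist_iff hd E).symm
  by_cases hz : PatLe ⟨k, z⟩ (patternOf π E)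
  · obtain ⟨f, hf, hE⟩ := (patLe_patternOf_iff _ _ _).mp hz
    have hs : subInd (runWord z Finset.univ) (((posList π).filter (· ∈ E)).map (runIdx π)) = 1 :=
      if_pos (e.mp hz)
    simp only [hz, and_true, isNormal_iff_of_occ hd hf hE, hs, mul_one]
  · have hs : subInd (runWord z Finset.univ) (((posList π).filter (· ∈ E)).map (runIdx π)) = 0 :=
      if_neg fun h => hz (e.mpr h)
    simp only [hz, and_false, if_false, hs, mul_zero, ite_self]

/-! ### Möbius inversion -/

lemma PatLe.eq_of_len {p q : PermPat} (h : PatLe p q) (hl : p.1 = q.1) : p = q := by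
  apply patLe_antisymm h
  obtain ⟨k, σ⟩ := p
  obtain ⟨n, π⟩ := q
  obtain rfl : k = n := hl
  obtain ⟨f, hf⟩ := h
  have hfid : ∀ i, f i = i := fun i => f.strictMono.fin_apply_eq i
  exact ⟨(OrderIso.refl (Fin k)).toOrderEmbedding, fun i j => by simpa [hfid] using (hf i j).symm⟩

/-- The finite set of all permutations of length at most `n`. -/
def permsUpTo (n : ℕ) : Finset PermPat :=
  (Finset.range (n + 1)).sigma fun m => (Finset.univ : Finset (Equiv.Perm (Fin m)))

lemma mem_permsUpTo {n : ℕ} {p : PermPat} : p ∈ permsUpTo n ↔ p.1 ≤ n := by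
  simp [permsUpTo]

/-- The defining recursion of the Möbius function, as a sum over a closed interval. -/
lemma sum_permMu {p q : PermPat} {n : ℕ} (hq : q.1 ≤ n) :
    ∑ z ∈ permsUpTo n, (if PatLe p z ∧ PatLe z q then permMu p z else 0)
      = if p = q then 1 else 0 := by
  have hqmem : q ∈ permsUpTo n := mem_permsUpTo.mpr hq
  rw [← Finset.sum_erase_add _ _ hqmem]
  have hlt : ∑ z ∈ (permsUpTo n).erase q, (if PatLe p z ∧ PatLe z q then permMu p z else 0)
      = ∑ m : Fin q.1, ∑ z : Equiv.Perm (Fin m.1),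
        if PatLe p ⟨m.1, z⟩ ∧ PatLe ⟨m.1, z⟩ q then permMu p ⟨m.1, z⟩ else 0 := by
    rw [← Finset.sum_range (fun m => ∑ z : Equiv.Perm (Fin m),
        if PatLe p ⟨m, z⟩ ∧ PatLe ⟨m, z⟩ q then permMu p ⟨m, z⟩ else 0),
      Finset.sum_sigma' (Finset.range q.1) (fun m => (Finset.univ : Finset (Equiv.Perm (Fin m))))]
    symm
    apply Finset.sum_subset
    · intro z hz
      have hz1 : z.1 < q.1 := by simpa using hz
      refine Finset.mem_erase.mpr ⟨?_, mem_permsUpTo.mpr (by omega)⟩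
      rintro rfl
      exact lt_irrefl _ hz1
    · intro z hz hz'
      rw [if_neg]
      rintro ⟨-, hzq⟩
      apply hz'
      have hne : z.1 ≠ q.1 := fun e => (Finset.mem_erase.mp hz).1 (hzq.eq_of_len e)
      exact Finset.mem_sigma.mpr
        ⟨Finset.mem_range.mpr (lt_of_le_of_ne hzq.len_le hne), Finset.mem_univ _⟩
  rw [hlt]
  by_cases hpq : p = q
  · subst hpq
    have h0 : ∑ m : Fin p.1, ∑ z : Equiv.Perm (Fin m.1),
        (if PatLe p ⟨m.1, z⟩ ∧ PatLe ⟨m.1, z⟩ p then permMu p ⟨m.1, z⟩ else 0) = 0 := by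
      refine Finset.sum_eq_zero fun m _ => Finset.sum_eq_zero fun z _ => if_neg ?_
      rintro ⟨h, -⟩
      have h1 : p.1 ≤ m.1 := h.len_le
      have h2 := m.isLt
      omega
    rw [h0, permMu]
    simp [patLe_refl]
  · by_cases hle : PatLe p q
    · rw [permMu, if_neg hpq, if_pos hle]
      simp [hle, patLe_refl, hpq]
    · have h0 : ∑ m : Fin q.1, ∑ z : Equiv.Perm (Fin m.1),
          (if PatLe p ⟨m.1, z⟩ ∧ PatLe ⟨m.1, z⟩ q then permMu p ⟨m.1, z⟩ else 0) = 0 := by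
        refine Finset.sum_eq_zero fun m _ => Finset.sum_eq_zero fun z _ => if_neg ?_
        exact fun h => hle (patLe_trans h.1 h.2)
      rw [h0]
      simp [hle, hpq]

/-- If `σ ≤ π` have the same number of descents, then
`μ(σ,π) = (−1)^{|π|−|σ|}·NE(σ,π)`. -/
theorem mobius_eq_NE_of_equal_descents {k n : ℕ} (σ : Equiv.Perm (Fin k))
    (π : Equiv.Perm (Fin n)) (hle : PatLe ⟨k, σ⟩ ⟨n, π⟩) (hdes : desNum σ = desNum π) :
    permMu ⟨k, σ⟩ ⟨n, π⟩ = (-1 : ℤ) ^ (n - k) * (NE ⟨k, σ⟩ π : ℤ) := by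
  -- the double sum of `μ(σ,z) (-1)^{|E|}` over `σ ≤ z ≤ π|_E` with `E` normal, in either order
  have h1 : ∑ z ∈ permsUpTo n, ∑ E : Finset (Fin n),
      (if (PatLe ⟨k, σ⟩ z ∧ PatLe z (patternOf π E)) ∧ IsNormal π E then
        permMu ⟨k, σ⟩ z * (-1) ^ E.card else 0) = permMu ⟨k, σ⟩ ⟨n, π⟩ * (-1) ^ n := by
    rw [Finset.sum_eq_single_of_mem (⟨n, π⟩ : PermPat) (mem_permsUpTo.mpr le_rfl)]
    · have h := sum_normal_above (z := π) (π := π) rfl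
      rw [if_pos rfl] at h
      rw [← h, Finset.mul_sum]
      refine Finset.sum_congr rfl fun E _ => ?_
      simp only [hle, true_and, and_comm, mul_ite, mul_zero]
    · intro z _ hz
      by_cases hzi : PatLe ⟨k, σ⟩ z ∧ PatLe z ⟨n, π⟩
      · have d1 := hzi.1.desNum_le
        have d2 := hzi.2.desNum_le
        simp only at d1 d2
        have h := sum_normal_above (z := z.2) (π := π) (by omega)
        rw [if_neg hz] at h
        replace h := congrArg (permMu ⟨k, σ⟩ z * ·) h
        simp only [mul_zero, Finset.mul_sum] at h
        refine (Finset.sum_congr rfl fun E _ => ?_).trans h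
        simp only [hzi.1, true_and, and_comm, mul_ite, mul_zero]
      · refine Finset.sum_eq_zero fun E _ => if_neg ?_
        exact fun h => hzi ⟨h.1.1, patLe_trans h.1.2 (patternOf_le π E)⟩
  have h2 : ∀ E : Finset (Fin n), ∑ z ∈ permsUpTo n,
      (if (PatLe ⟨k, σ⟩ z ∧ PatLe z (patternOf π E)) ∧ IsNormal π E then
        permMu ⟨k, σ⟩ z * (-1) ^ E.card else 0)
      = if IsEmb ⟨k, σ⟩ π E ∧ IsNormal π E then (-1) ^ k else 0 := by
    intro E
    by_cases hN : IsNormal π E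
    · have h := sum_permMu (p := ⟨k, σ⟩) (q := patternOf π E) (n := n) (patternOf_le π E).len_le
      simp only [hN, and_true]
      have e : ∀ z, (if PatLe ⟨k, σ⟩ z ∧ PatLe z (patternOf π E) then
          permMu ⟨k, σ⟩ z * (-1) ^ E.card else 0) = (if PatLe ⟨k, σ⟩ z ∧ PatLe z (patternOf π E)
          then permMu ⟨k, σ⟩ z else 0) * (-1) ^ E.card := fun z => by rw [ite_mul, zero_mul]
      simp only [e]
      rw [← Finset.sum_mul, h, IsEmb]
      by_cases hE : patternOf π E = ⟨k, σ⟩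
      · have hc : E.card = k := congrArg Sigma.fst hE
        rw [if_pos hE.symm, if_pos hE, one_mul, hc]
      · rw [if_neg (Ne.symm hE), if_neg hE, zero_mul]
    · simp [hN]
  rw [Finset.sum_comm, Finset.sum_congr rfl fun E _ => h2 E, ← Finset.sum_filter,
    Finset.sum_const, nsmul_eq_mul] at h1
  have hNE : NE ⟨k, σ⟩ π = (Finset.univ.filter fun E : Finset (Fin n) =>
      IsEmb ⟨k, σ⟩ π E ∧ IsNormal π E).card := by
    rw [NE, ← Set.ncard_coe_finset]
    simp
  rw [← hNE] at h1
  have hkn : k ≤ n := hle.len_le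
  obtain ⟨d, rfl⟩ := Nat.exists_eq_add_of_le hkn
  rw [Nat.add_sub_cancel_left]
  have s1 : ((-1 : ℤ) ^ k) * (-1) ^ k = 1 := by rw [← mul_pow]; simp
  have s2 : ((-1 : ℤ) ^ d) * (-1) ^ d = 1 := by rw [← mul_pow]; simp
  rw [pow_add] at h1
  calc permMu ⟨k, σ⟩ ⟨k + d, π⟩
      = (permMu ⟨k, σ⟩ ⟨k + d, π⟩ * ((-1) ^ k * (-1) ^ d)) * ((-1) ^ k * (-1) ^ d) := by
        linear_combination (-permMu ⟨k, σ⟩ ⟨k + d, π⟩) * ((-1 : ℤ) ^ d * (-1) ^ d * s1 + s2)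
    _ = (-1) ^ d * (NE ⟨k, σ⟩ π : ℤ) := by
        rw [← h1]
        linear_combination ((-1 : ℤ) ^ d * (NE ⟨k, σ⟩ π : ℤ)) * s1
end
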